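/- arXiv:2007.02405 — 6 statements merged into one kernel-verified Lean document; each statement's English description precedes it below -/
import Mathlib

section
/- For all natural numbers w, v, m with v + 1 ≤ w, the following identity holds in ℤ: ∑_{j=0}^{m} (-1)^j · C(w,j) · C(w-j, v) = (-1)^m · C(w,v) · C(w-v-1, m). -/
theorem choose_mul_choose_swap (w v j : ℕ) :
    w.choose j * (w - j).choose v = w.choose v * (w - v).choose j := by
  have h1 := Nat.choose_mul (n := w) (k := v + j) (s := j) (Nat.le_add_left j v)
  have h2 := Nat.choose_mul (n := w) (k := v + j) (s := v) (Nat.le_add_right v j)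
  rw [Nat.add_sub_cancel] at h1
  rw [Nat.add_sub_cancel_left] at h2
  rw [← h1, ← h2, Nat.choose_symm_add]

/-- For all natural numbers `w, v, m` with `v + 1 ≤ w`, the identity
`∑_{j=0}^{m} (-1)^j C(w,j) C(w-j,v) = (-1)^m C(w,v) C(w-v-1,m)` holds in `ℤ`. -/
theorem sum_alternating_choose_mul_choose (w v m : ℕ) (h : v + 1 ≤ w) :
    ∑ j ∈ Finset.range (m + 1),
        (-1 : ℤ) ^ j * (w.choose j : ℤ) * ((w - j).choose v : ℤ) =
      (-1 : ℤ) ^ m * (w.choose v : ℤ) * ((w - v - 1).choose m : ℤ) := by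
  obtain ⟨d, rfl⟩ := Nat.exists_eq_add_of_le h
  have e1 : v + 1 + d - v - 1 = d := by omega
  have e2 : v + 1 + d - v = d + 1 := by omega
  have key : ∀ j, ((v + 1 + d).choose j : ℤ) * ((v + 1 + d - j).choose v : ℤ)
      = ((v + 1 + d).choose v : ℤ) * ((d + 1).choose j : ℤ) := by
    intro j
    have := choose_mul_choose_swap (v + 1 + d) v j
    rw [e2] at this
    exact_mod_cast this
  rw [e1]
  simp only [mul_assoc, key]
  induction m with
  | zero => simp
  | succ m ih =>
    rw [Finset.sum_range_succ, ih, Nat.choose_succ_succ]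
    push_cast
    ring
end

section
/- Let C be an [n, k, d]_q MDS code with minimum distance d ≥ 3, and let w be a natural number with d - 1 ≤ w ≤ n. Then the overall number A_w^Σ(V^{≤1}) of Hamming-weight-w vectors lying in cosets of C of weight at most 1 satisfies A_w^Σ(V^{≤1}) = C(n,w) · [ ∑_{j=0}^{w-d} (-1)^j C(w,j) ( q^{w-d+1-j}(1 + n(q-1)) - 1 - (w-j)(q-1) ) - ε · C(w, d-1) · (n-d+1)(q-1) ], as an identity of integers. -/
open Finset

/-- The weight of the coset `x + C` of the linear code `C ⊆ F_q^n`, i.e. the smallest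
Hamming weight of a vector in `x + C`; equivalently the Hamming distance from `x` to `C`. -/
noncomputable def cosetWeight {F : Type*} [Field F] [Fintype F] [DecidableEq F] {n : ℕ}
    (C : Submodule F (Fin n → F)) (x : Fin n → F) : ℕ :=
  sInf {m : ℕ | ∃ c ∈ C, hammingNorm (x - c) = m}

/-- `A_w(C)`: the number of codewords of `C` of Hamming weight `w`. -/
noncomputable def numCodewordsOfWeight {F : Type*} [Field F] [Fintype F] [DecidableEq F] {n : ℕ}
    (C : Submodule F (Fin n → F)) (w : ℕ) : ℕ :=
  {x : Fin n → F | x ∈ C ∧ hammingNorm x = w}.ncard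

/-- `A_w^Σ(V^{(W)})`: the overall number of Hamming-weight-`w` vectors of `F_q^n` lying in
cosets of `C` of weight exactly `W`. -/
noncomputable def numVectorsCosetExact {F : Type*} [Field F] [Fintype F] [DecidableEq F] {n : ℕ}
    (C : Submodule F (Fin n → F)) (w W : ℕ) : ℕ :=
  {x : Fin n → F | hammingNorm x = w ∧ cosetWeight C x = W}.ncard

/-- `A_w^Σ(V^{≤W})`: the overall number of Hamming-weight-`w` vectors of `F_q^n` lying in
cosets of `C` of weight at most `W`. -/
noncomputable def numVectorsCosetLe {F : Type*} [Field F] [Fintype F] [DecidableEq F] {n : ℕ}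
    (C : Submodule F (Fin n → F)) (w W : ℕ) : ℕ :=
  {x : Fin n → F | hammingNorm x = w ∧ cosetWeight C x ≤ W}.ncard

/-- The code `C` has minimum distance `d`: every nonzero codeword has Hamming weight at
least `d`, and some nonzero codeword has Hamming weight exactly `d`. -/
def HasMinDist {F : Type*} [Field F] [Fintype F] [DecidableEq F] {n : ℕ}
    (C : Submodule F (Fin n → F)) (d : ℕ) : Prop :=
  (∀ c ∈ C, c ≠ 0 → d ≤ hammingNorm c) ∧ ∃ c ∈ C, c ≠ 0 ∧ hammingNorm c = d

/-- The code `C` has covering radius `R`: every vector of `F_q^n` is at Hamming distance at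
most `R` from `C` and some vector is at Hamming distance exactly `R` from `C`. -/
def HasCoveringRadius {F : Type*} [Field F] [Fintype F] [DecidableEq F] {n : ℕ}
    (C : Submodule F (Fin n → F)) (R : ℕ) : Prop :=
  (∀ x : Fin n → F, cosetWeight C x ≤ R) ∧ ∃ x : Fin n → F, cosetWeight C x = R

/-- `V_m(t) = ∑_{i=0}^t (q-1)^i C(m,i)`, the volume of a Hamming sphere of radius `t`
in `F_q^m`, as a rational number. -/
def sphereVol (q m t : ℕ) : ℚ :=
  ∑ i ∈ Finset.range (t + 1), ((q : ℚ) - 1) ^ i * (m.choose i : ℚ)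

lemma aux_alt (w : ℕ) (hw : 2 ≤ w) (a : ℤ) :
    ∑ j ∈ Finset.range (w + 1), (-1 : ℤ) ^ j * (w.choose j : ℤ) * (1 + ((w : ℤ) - j) * a) = 0 := by
  have h1 : ∑ j ∈ Finset.range (w + 1), (-1 : ℤ) ^ j * (w.choose j : ℤ) = 0 :=
    Int.alternating_sum_range_choose_of_ne (by omega)
  obtain ⟨m, rfl⟩ : ∃ m, w = m + 1 := ⟨w - 1, by omega⟩
  have h2 : ∑ j ∈ Finset.range (m + 1), (-1 : ℤ) ^ j * (m.choose j : ℤ) = 0 :=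
    Int.alternating_sum_range_choose_of_ne (by omega)
  have h3 : ∑ j ∈ Finset.range (m + 1 + 1), (-1 : ℤ) ^ j * ((m + 1).choose j : ℤ) *
      (((m + 1 : ℕ) : ℤ) - j) = 0 := by
    rw [Finset.sum_range_succ, sub_self, mul_zero, add_zero]
    have : ∀ j ∈ Finset.range (m + 1), (-1 : ℤ) ^ j * ((m + 1).choose j : ℤ) *
      (((m + 1 : ℕ) : ℤ) - j) = (m + 1) * ((-1 : ℤ) ^ j * (m.choose j : ℤ)) := by
      intro j hj
      have hj' : j ≤ m := by simpa [Nat.lt_succ_iff] using hj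
      have := Nat.choose_mul_succ_eq m j
      have h4 : (((m.choose j) * (m + 1) : ℕ) : ℤ) = (((m+1).choose j * (m + 1 - j) : ℕ) : ℤ) := by
        rw [this]
      rw [Nat.cast_mul, Nat.cast_mul, Nat.cast_sub (by omega)] at h4
      push_cast at h4 ⊢
      linear_combination (-(-1 : ℤ) ^ j) * h4
    rw [Finset.sum_congr rfl this, ← Finset.mul_sum, h2, mul_zero]
  calc _ = ∑ j ∈ Finset.range (m + 1 + 1), (-1 : ℤ) ^ j * ((m + 1).choose j : ℤ) +
      a * ∑ j ∈ Finset.range (m + 1 + 1), (-1 : ℤ) ^ j * ((m + 1).choose j : ℤ) *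
      (((m + 1 : ℕ) : ℤ) - j) := by
        rw [Finset.mul_sum, ← Finset.sum_add_distrib]
        refine Finset.sum_congr rfl fun j _ => ?_
        ring
    _ = 0 := by rw [h1, h3]; ring

/-- size of a shortened MDS code -/
def mdsN (q d t : ℕ) : ℕ := q ^ (t + 1 - d)

lemma aux_algebra (q n d w : ℕ) (hd : 3 ≤ d) (hw1 : d - 1 ≤ w) (hwn : w ≤ n) :
    ∑ m ∈ Finset.range (w + 1), (w.choose m : ℤ) * ((-1 : ℤ) ^ (w - m) *
      ((1 - (n : ℤ)) * mdsN q d m + m * (q * mdsN q d m) + ((n : ℤ) - m) * mdsN q d (m + 1))) =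
    ((∑ j ∈ Finset.range (w + 1 - d), (-1 : ℤ) ^ j * (w.choose j : ℤ) *
            ((q : ℤ) ^ (w - d + 1 - j) * (1 + (n : ℤ) * ((q : ℤ) - 1)) - 1
              - ((w : ℤ) - (j : ℤ)) * ((q : ℤ) - 1)))
          - (-1 : ℤ) ^ (w + d) * (w.choose (d - 1) : ℤ) *
              ((n : ℤ) - (d : ℤ) + 1) * ((q : ℤ) - 1)) := by
  rw [← Finset.sum_flip, ← sub_zero (Finset.sum _ _), ← aux_alt w (by omega) ((q : ℤ) - 1),
    ← Finset.sum_sub_distrib]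
  obtain ⟨e, rfl⟩ : ∃ e, w = e + (d - 1) := ⟨w - (d - 1), by omega⟩
  obtain ⟨d, rfl⟩ : ∃ d', d = d' + 1 := ⟨d - 1, by omega⟩
  have e1 : e + (d + 1 - 1) + 1 = (e + 1) + d := by omega
  have e2 : e + (d + 1 - 1) + 1 - (d + 1) = e := by omega
  have e3 : e + (d + 1 - 1) = e + d := by omega
  rw [e2, e1, Finset.sum_range_add, Finset.sum_range_succ]
  simp only [Nat.add_sub_cancel]
  have z : ∀ j ∈ Finset.range d, ((e + d).choose (e + d - (e + 1 + j)) : ℤ) *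
      ((-1 : ℤ) ^ (e + d - (e + d - (e + 1 + j))) *
        ((1 - (n : ℤ)) * mdsN q (d + 1) (e + d - (e + 1 + j)) +
          ((e + d - (e + 1 + j) : ℕ) : ℤ) * (q * mdsN q (d + 1) (e + d - (e + 1 + j))) +
          ((n : ℤ) - ((e + d - (e + 1 + j) : ℕ) : ℤ)) *
            mdsN q (d + 1) (e + d - (e + 1 + j) + 1))) -
      (-1 : ℤ) ^ (e + 1 + j) * ((e + d).choose (e + 1 + j) : ℤ) *
        (1 + (((e + d : ℕ) : ℤ) - ((e + 1 + j : ℕ) : ℤ)) * ((q : ℤ) - 1)) = 0 := by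
    intro j hj
    have hj : j < d := by simpa using hj
    rw [Nat.choose_symm (by omega)]
    have a1 : e + d - (e + d - (e + 1 + j)) = e + 1 + j := by omega
    have a2 : mdsN q (d + 1) (e + d - (e + 1 + j)) = 1 := by
      rw [mdsN, show e + d - (e + 1 + j) + 1 - (d + 1) = 0 by omega, pow_zero]
    have a3 : mdsN q (d + 1) (e + d - (e + 1 + j) + 1) = 1 := by
      rw [mdsN, show e + d - (e + 1 + j) + 1 + 1 - (d + 1) = 0 by omega, pow_zero]
    rw [a1, a2, a3, Nat.cast_sub (by omega)]
    push_cast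
    ring
  rw [Finset.sum_eq_zero z, add_zero, sub_eq_add_neg]
  congr 1
  · refine Finset.sum_congr rfl fun j hj => ?_
    have hj : j < e := by simpa using hj
    rw [Nat.choose_symm (by omega)]
    have a1 : e + d - (e + d - j) = j := by omega
    have a2 : mdsN q (d + 1) (e + d - j) = q ^ (e - j) := by
      rw [mdsN]; congr 1; omega
    have a3 : mdsN q (d + 1) (e + d - j + 1) = q ^ (e - j) * q := by
      rw [mdsN, ← pow_succ]; congr 1; omega
    rw [a1, a2, a3, Nat.cast_sub (by omega), show e + d - (d + 1) + 1 - j = e - j by omega]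
    push_cast
    ring
  · have a2 : mdsN q (d + 1) d = 1 := by simp [mdsN]
    have a3 : mdsN q (d + 1) (d + 1) = q := by simp [mdsN]
    have a4 : (e + d).choose e = (e + d).choose d := by
      rw [Nat.choose_symm_add]
    rw [show e + d - e = d by omega, show e + d - d = e by omega, a2, a3, a4]
    have a5 : (-1 : ℤ) ^ (e + d + (d + 1)) = - (-1) ^ e := by
      rw [show e + d + (d + 1) = e + 1 + 2 * d by ring, pow_add, pow_mul, pow_succ]; simp
    rw [a5]
    push_cast
    ring

lemma aux_incl {F : Type*} [Field F] [Fintype F] [DecidableEq F] {n : ℕ}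
    (P : (Fin n → F) → ℤ) (w : ℕ) (f : ℕ → ℤ)
    (hf : ∀ T : Finset (Fin n), ∑ x : Fin n → F, (if ∀ i ∉ T, x i = 0 then P x else 0) = f T.card) :
    ∑ x : Fin n → F, (if hammingNorm x = w then P x else 0) =
      (n.choose w : ℤ) * ∑ m ∈ Finset.range (w + 1), (w.choose m : ℤ) * ((-1 : ℤ) ^ (w - m) * f m) := by
  have key : ∀ S : Finset (Fin n), ∀ x : Fin n → F,
      (if (Finset.univ.filter (fun i => x i ≠ 0)) = S then (1 : ℤ) else 0) =
      ∑ T ∈ S.powerset, (-1 : ℤ) ^ (S.card - T.card) * (if ∀ i ∉ T, x i = 0 then 1 else 0) := by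
    intro S x
    by_cases hx : ∀ i ∉ S, x i = 0
    · have := Finset.prod_add (fun _ => (1 : ℤ)) (fun i => - (if x i = 0 then (1 : ℤ) else 0)) S
      trans ∏ i ∈ S, (1 + - (if x i = 0 then (1 : ℤ) else 0))
      · split_ifs with h
        · symm
          refine Finset.prod_eq_one fun i hi => ?_
          rw [← h] at hi
          simp at hi
          simp [hi]
        · symm
          have : ∃ i ∈ S, x i = 0 := by
            by_contra! hc
            apply h
            ext i
            simp
            constructor
            · intro h1; by_contra h2; exact h1 (hx i h2)
            · exact hc i
          obtain ⟨i, hi, h0⟩ := this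
          exact Finset.prod_eq_zero hi (by simp [h0])
      · rw [this]
        refine Finset.sum_congr rfl fun T hT => ?_
        have hT := Finset.mem_powerset.1 hT
        rw [Finset.prod_const_one, one_mul, Finset.prod_neg, Finset.card_sdiff_of_subset hT]
        congr 1
        split_ifs with h
        · refine Finset.prod_eq_one fun i hi => ?_
          rw [if_pos (h i (Finset.mem_sdiff.1 hi).2)]
        · push Not at h
          obtain ⟨i, hi, h0⟩ := h
          refine Finset.prod_eq_zero (i := i) ?_ (by simp [h0])
          rw [Finset.mem_sdiff]
          refine ⟨?_, hi⟩
          by_contra h3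
          exact h0 (hx i h3)
    · rw [if_neg, Finset.sum_eq_zero]
      · intro T hT
        rw [if_neg, mul_zero]
        intro h
        exact hx fun i hi => h i fun h' => hi (Finset.mem_powerset.1 hT h')
      · rintro rfl
        apply hx
        intro i hi
        simpa using hi
  have step : ∀ S ∈ Finset.powersetCard w (Finset.univ : Finset (Fin n)),
      ∑ x : Fin n → F, (if (Finset.univ.filter (fun i => x i ≠ 0)) = S then P x else 0) =
      ∑ m ∈ Finset.range (w + 1), (w.choose m : ℤ) * ((-1 : ℤ) ^ (w - m) * f m) := by
    intro S hS
    have hS := (Finset.mem_powersetCard.1 hS).2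
    have e1 : ∀ x : Fin n → F,
      (if (Finset.univ.filter (fun i => x i ≠ 0)) = S then P x else 0) =
      ∑ T ∈ S.powerset, (-1 : ℤ) ^ (S.card - T.card) * (if ∀ i ∉ T, x i = 0 then P x else 0) := by
      intro x
      have := congrArg (· * P x) (key S x)
      simp only [ite_mul, one_mul, zero_mul, Finset.sum_mul, mul_assoc] at this
      exact this
    rw [Finset.sum_congr rfl fun x _ => e1 x, Finset.sum_comm]
    simp_rw [← Finset.mul_sum, hf]
    rw [Finset.sum_powerset_apply_card (fun m => (-1 : ℤ) ^ (S.card - m) * f m), hS]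
    simp only [nsmul_eq_mul]
  have e2 : ∀ x : Fin n → F, (if hammingNorm x = w then P x else 0) =
      ∑ S ∈ Finset.powersetCard w (Finset.univ : Finset (Fin n)),
        (if (Finset.univ.filter (fun i => x i ≠ 0)) = S then P x else 0) := by
    intro x
    rw [Finset.sum_ite_eq]
    simp [Finset.mem_powersetCard, hammingNorm]
  rw [Finset.sum_congr rfl fun x _ => e2 x, Finset.sum_comm, Finset.sum_congr rfl step]
  simp

lemma aux_card {F : Type*} [Field F] [Fintype F] [DecidableEq F]
    (q n k d : ℕ) (hq : Fintype.card F = q)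
    (C : Submodule F (Fin n → F)) [DecidablePred (· ∈ C)]
    (hk : Module.finrank F C = k) (hmin : HasMinDist C d) (hMDS : d + k = n + 1)
    (hd : 3 ≤ d) (T : Finset (Fin n)) :
    ∑ x : Fin n → F, (if ∀ i ∉ T, x i = 0 then (if x ∈ C then (1 : ℤ) else 0) else 0) =
      mdsN q d T.card := by
  classical
  let R : (U : Finset (Fin n)) → C →ₗ[F] ((Uᶜ : Finset (Fin n)) → F) := fun U =>
    (LinearMap.funLeft F F (fun i : (Uᶜ : Finset (Fin n)) => (i : Fin n))) ∘ₗ C.subtype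
  have hR : ∀ U (c : C) i, R U c i = (c : Fin n → F) i := fun U c i => rfl
  have hker : ∀ U (c : C), c ∈ LinearMap.ker (R U) ↔ ∀ i ∉ U, (c : Fin n → F) i = 0 := by
    intro U c
    rw [LinearMap.mem_ker, funext_iff]
    simp [hR]
  have hsmall : ∀ U : Finset (Fin n), U.card < d → LinearMap.ker (R U) = ⊥ := by
    intro U hU
    rw [eq_bot_iff]
    intro c hc
    rw [hker] at hc
    by_contra h0
    have h1 := hmin.1 c c.2 (by simpa using h0)
    have : hammingNorm (c : Fin n → F) ≤ U.card := by
      apply Finset.card_le_card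
      intro i hi
      by_contra h
      simp at hi
      exact hi (hc i h)
    omega
  have hfr : Module.finrank F (LinearMap.ker (R T)) = T.card + 1 - d := by
    by_cases hT : T.card < d
    · rw [hsmall T hT, finrank_bot]; omega
    · have hTn : T.card ≤ n := by simpa using Finset.card_le_univ T
      obtain ⟨T0, h0, hc⟩ := Finset.exists_subset_card_eq (s := T) (n := d - 1) (by omega)
      have hs0 : Function.Surjective (R T0) := by
        have hi : Function.Injective (R T0) := LinearMap.ker_eq_bot.1 (hsmall T0 (by omega))
        refine (LinearMap.injective_iff_surjective_of_finrank_eq_finrank ?_).1 hi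
        rw [hk, Module.finrank_fintype_fun_eq_card, Fintype.card_coe, Finset.card_compl, hc,
          Fintype.card_fin]
        omega
      have hs : Function.Surjective (R T) := by
        intro y
        obtain ⟨c, hc⟩ := hs0 (fun i => if h : (i : Fin n) ∈ Tᶜ then y ⟨i, h⟩ else 0)
        refine ⟨c, ?_⟩
        ext i
        have hi : (i : Fin n) ∈ T0ᶜ := by
          have := i.2
          simp only [Finset.mem_compl] at this ⊢
          exact fun h => this (h0 h)
        have := congrFun hc ⟨i, hi⟩
        rw [hR] at this ⊢
        simpa using this
      have := LinearMap.finrank_range_add_finrank_ker (R T)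
      rw [LinearMap.range_eq_top.2 hs, finrank_top, hk, Module.finrank_fintype_fun_eq_card,
        Fintype.card_coe, Finset.card_compl, Fintype.card_fin] at this
      omega
  have hcard : Nat.card (LinearMap.ker (R T)) = mdsN q d T.card := by
    rw [Module.natCard_eq_pow_finrank (K := F), hfr, Nat.card_eq_fintype_card, hq, mdsN]
  rw [← hcard]
  simp_rw [← ite_and]
  rw [Finset.sum_boole]
  congr 1
  rw [← Fintype.card_subtype, ← Nat.card_eq_fintype_card]
  refine Nat.card_congr ?_
  exact
  { toFun := fun x => ⟨⟨x.1, x.2.2⟩, (hker T _).2 x.2.1⟩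
    invFun := fun c => ⟨c.1.1, (hker T _).1 c.2, c.1.2⟩
    left_inv := fun x => rfl
    right_inv := fun x => rfl }

lemma aux_P {F : Type*} [Field F] [Fintype F] [DecidableEq F]
    (n d : ℕ) (C : Submodule F (Fin n → F)) [DecidablePred (· ∈ C)] (hmin : HasMinDist C d)
    (hd : 3 ≤ d) (x : Fin n → F) :
    (if cosetWeight C x ≤ 1 then (1 : ℤ) else 0) =
      (1 - (n : ℤ)) * (if x ∈ C then 1 else 0) +
        ∑ i : Fin n, ∑ a : F, (if x - Pi.single i a ∈ C then 1 else 0) := by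
  have hsm : ∀ c ∈ C, hammingNorm c ≤ 2 → c = 0 := by
    intro c hc h
    by_contra h0
    have := hmin.1 c hc h0
    omega
  have hn1 : ∀ (i : Fin n) (a : F), hammingNorm (Pi.single i a : Fin n → F) ≤ 1 := by
    intro i a
    rw [← Finset.card_singleton i]
    apply Finset.card_le_card
    intro j hj
    simp only [Finset.mem_filter, Finset.mem_univ, true_and] at hj
    by_contra h
    exact hj (Pi.single_eq_of_ne (by simpa using h) _)
  have hn2 : ∀ (i j : Fin n) (a b : F),
      hammingNorm (Pi.single i a - Pi.single j b : Fin n → F) ≤ 2 := by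
    intro i j a b
    refine le_trans ?_ (Finset.card_le_two (a := i) (b := j))
    apply Finset.card_le_card
    intro l hl
    simp only [Finset.mem_filter, Finset.mem_univ, true_and] at hl
    by_contra h
    simp at h
    apply hl
    simp [Pi.single_eq_of_ne h.1, Pi.single_eq_of_ne h.2]
  have hcw : cosetWeight C x ≤ 1 ↔ x ∈ C ∨ ∃ i a, x - Pi.single i a ∈ C := by
    constructor
    · intro h
      have hne : {m : ℕ | ∃ c ∈ C, hammingNorm (x - c) = m}.Nonempty := ⟨_, 0, C.zero_mem, rfl⟩
      obtain ⟨c, hc, he⟩ := Nat.sInf_mem hne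
      have hle : hammingNorm (x - c) ≤ 1 := by rw [he]; exact h
      obtain h0 | hne' := isEmpty_or_nonempty (Fin n)
      · left
        have : x = c := by ext i; exact h0.elim i
        rwa [this]
      · right
        obtain ⟨i, hi⟩ := Finset.card_le_one_iff_subset_singleton.1 hle
        refine ⟨i, (x - c) i, ?_⟩
        convert hc using 1
        have : (Pi.single i ((x - c) i) : Fin n → F) = x - c := by
          ext j
          by_cases hj : j = i
          · subst hj; simp
          · rw [Pi.single_eq_of_ne hj]
            by_contra h
            have := hi (Finset.mem_filter.2 ⟨Finset.mem_univ j, Ne.symm h⟩)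
            simp at this
            exact hj this
        rw [this]
        abel
    · rintro (h | ⟨i, a, h⟩)
      · exact (Nat.sInf_le (show hammingNorm (x - x) ∈ {m : ℕ | ∃ c ∈ C, hammingNorm (x - c) = m} from ⟨x, h, rfl⟩)).trans (by simp)
      · refine (Nat.sInf_le (show hammingNorm (x - (x - Pi.single i a)) ∈ {m : ℕ | ∃ c ∈ C, hammingNorm (x - c) = m} from ⟨_, h, rfl⟩)).trans ?_
        rw [sub_sub_cancel]
        exact hn1 i a
  by_cases hx : x ∈ C
  · rw [if_pos (hcw.2 (Or.inl hx)), if_pos hx]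
    have : ∀ (i : Fin n) (a : F), x - Pi.single i a ∈ C ↔ a = 0 := by
      intro i a
      constructor
      · intro h
        have h2 : (Pi.single i a : Fin n → F) ∈ C := by
          have := C.sub_mem hx h
          rwa [sub_sub_cancel] at this
        have := hsm _ h2 ((hn1 i a).trans (by norm_num))
        simpa using this
      · rintro rfl
        simpa using hx
    simp [this]
  · by_cases h1 : ∃ i a, x - Pi.single i a ∈ C
    · rw [if_pos (hcw.2 (Or.inr h1)), if_neg hx]
      obtain ⟨i, a, h⟩ := h1
      have ha : a ≠ 0 := by
        rintro rfl
        apply hx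
        simpa using h
      have : ∀ (j : Fin n) (b : F), x - Pi.single j b ∈ C ↔ (j = i ∧ b = a) := by
        intro j b
        constructor
        · intro h2
          have h3 := C.sub_mem h2 h
          rw [sub_sub_sub_cancel_left] at h3
          have h4 := hsm _ h3 (hn2 _ _ _ _)
          have hji : j = i := by
            by_contra hji
            have := congrFun h4 i
            simp [Pi.single_eq_of_ne (Ne.symm hji)] at this
            exact ha this
          subst hji
          have := congrFun h4 j
          simp at this
          exact ⟨rfl, (sub_eq_zero.1 this).symm⟩
        · rintro ⟨rfl, rfl⟩
          exact h
      simp only [this, ite_and]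
      simp
    · have h2 : ¬ cosetWeight C x ≤ 1 := by
        rw [hcw]; exact not_or.2 ⟨hx, h1⟩
      rw [if_neg h2, if_neg hx]
      push Not at h1
      simp [h1]

lemma aux_f {F : Type*} [Field F] [Fintype F] [DecidableEq F]
    (q n k d : ℕ) (hq : Fintype.card F = q)
    (C : Submodule F (Fin n → F))
    (hk : Module.finrank F C = k) (hmin : HasMinDist C d) (hMDS : d + k = n + 1)
    (hd : 3 ≤ d) (T : Finset (Fin n)) :
    ∑ x : Fin n → F, (if ∀ i ∉ T, x i = 0 then
      (if cosetWeight C x ≤ 1 then (1 : ℤ) else 0) else 0) =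
      (1 - (n : ℤ)) * mdsN q d T.card + T.card * (q * mdsN q d T.card) +
        ((n : ℤ) - T.card) * mdsN q d (T.card + 1) := by
  classical
  have hc := aux_card q n k d hq C hk hmin hMDS hd
  have h1 : ∀ x : Fin n → F, (if ∀ i ∉ T, x i = 0 then
      (if cosetWeight C x ≤ 1 then (1 : ℤ) else 0) else 0) =
      (1 - (n : ℤ)) * (if ∀ i ∉ T, x i = 0 then (if x ∈ C then 1 else 0) else 0) +
      ∑ i : Fin n, ∑ a : F, (if ∀ i ∉ T, x i = 0 then
        (if x - Pi.single i a ∈ C then 1 else 0) else 0) := by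
    intro x
    rw [aux_P n d C hmin hd x]
    split_ifs <;> simp
  have hin : ∀ i ∈ T, ∑ a : F, ∑ x : Fin n → F, (if ∀ i ∉ T, x i = 0 then
        (if x - Pi.single i a ∈ C then (1 : ℤ) else 0) else 0) = q * mdsN q d T.card := by
    intro i hi
    have : ∀ a : F, ∑ x : Fin n → F, (if ∀ i ∉ T, x i = 0 then
        (if x - Pi.single i a ∈ C then (1 : ℤ) else 0) else 0) = mdsN q d T.card := by
      intro a
      rw [← hc T]
      refine Fintype.sum_equiv (Equiv.subRight (Pi.single i a)) _ _ fun x => ?_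
      have : (∀ j ∉ T, x j = 0) ↔ (∀ j ∉ T, (x - Pi.single i a : Fin n → F) j = 0) := by
        refine forall₂_congr fun j hj => ?_
        have : j ≠ i := by rintro rfl; exact hj hi
        simp [Pi.single_eq_of_ne this]
      simp only [this, Equiv.subRight_apply]
    simp [this, hq]
  have hout : ∀ i ∉ T, ∑ a : F, ∑ x : Fin n → F, (if ∀ i ∉ T, x i = 0 then
        (if x - Pi.single i a ∈ C then (1 : ℤ) else 0) else 0) = mdsN q d (T.card + 1) := by
    intro i hi
    rw [← Finset.card_insert_of_notMem hi, ← hc (insert i T)]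
    have : ∀ a : F, ∑ x : Fin n → F, (if ∀ i ∉ T, x i = 0 then
        (if x - Pi.single i a ∈ C then (1 : ℤ) else 0) else 0) =
        ∑ x : Fin n → F, (if a = - x i then (if ∀ j ∉ insert i T, x j = 0 then
        (if x ∈ C then (1 : ℤ) else 0) else 0) else 0) := by
      intro a
      refine Fintype.sum_equiv (Equiv.subRight (Pi.single i a)) _ _ fun x => ?_
      rw [← ite_and]
      have : (∀ j ∉ T, x j = 0) ↔ (a = - (x - Pi.single i a : Fin n → F) i ∧
          ∀ j ∉ insert i T, (x - Pi.single i a : Fin n → F) j = 0) := by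
        constructor
        · intro h
          refine ⟨by simp [h i hi], fun j hj => ?_⟩
          rw [Finset.mem_insert, not_or] at hj
          simp [Pi.single_eq_of_ne hj.1, h j hj.2]
        · rintro ⟨h1, h2⟩ j hj
          by_cases hji : j = i
          · subst hji
            simp at h1
            linear_combination h1
          · have := h2 j (by simp [hji, hj])
            simpa [Pi.single_eq_of_ne hji] using this
      simp only [this, Equiv.subRight_apply, ite_and]
    rw [Finset.sum_congr rfl fun a _ => this a, Finset.sum_comm]
    refine Finset.sum_congr rfl fun x _ => ?_
    rw [Finset.sum_ite_eq']
    simp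
  rw [Finset.sum_congr rfl fun x _ => h1 x, Finset.sum_add_distrib, ← Finset.mul_sum, hc T,
    add_assoc]
  congr 1
  rw [Finset.sum_comm]
  have h2 : ∀ i : Fin n, ∑ x : Fin n → F, ∑ a : F, (if ∀ i ∉ T, x i = 0 then
        (if x - Pi.single i a ∈ C then (1 : ℤ) else 0) else 0) =
        if i ∈ T then (q * mdsN q d T.card : ℤ) else mdsN q d (T.card + 1) := by
    intro i
    rw [Finset.sum_comm]
    split_ifs with h
    · exact hin i h
    · exact hout i h
  have hTn : T.card ≤ n := by simpa using Finset.card_le_univ T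
  rw [Finset.sum_congr rfl fun i _ => h2 i, Finset.sum_ite, Finset.sum_const, Finset.sum_const,
    Finset.filter_not]
  simp [Finset.card_sdiff_of_subset, Nat.cast_sub hTn]

/-- **Integral weight spectrum of cosets of weight ≤ 1 of an MDS code** (Lemma 4.1).
For an `[n,k,d]_q` MDS code with `d ≥ 3` and `d-1 ≤ w ≤ n`,
`A_w^Σ(V^{≤1}) = C(n,w) [ ∑_{j=0}^{w-d} (-1)^j C(w,j)
  ( q^{w-d+1-j}(1+n(q-1)) - 1 - (w-j)(q-1) ) - (-1)^{w-d} C(w,d-1)(n-d+1)(q-1) ]`. -/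
theorem numVectorsCosetLe_one_eq {F : Type*} [Field F] [Fintype F] [DecidableEq F]
    (q n k d w : ℕ) (hq : Fintype.card F = q)
    (C : Submodule F (Fin n → F))
    (hk : Module.finrank F C = k) (hmin : HasMinDist C d) (hMDS : d + k = n + 1)
    (hd : 3 ≤ d) (hw1 : d - 1 ≤ w) (hwn : w ≤ n) :
    (numVectorsCosetLe C w 1 : ℤ) =
      (n.choose w : ℤ) *
        ((∑ j ∈ Finset.range (w + 1 - d), (-1 : ℤ) ^ j * (w.choose j : ℤ) *
            ((q : ℤ) ^ (w - d + 1 - j) * (1 + (n : ℤ) * ((q : ℤ) - 1)) - 1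
              - ((w : ℤ) - (j : ℤ)) * ((q : ℤ) - 1)))
          - (-1 : ℤ) ^ (w + d) * (w.choose (d - 1) : ℤ) *
              ((n : ℤ) - (d : ℤ) + 1) * ((q : ℤ) - 1)) := by
  classical
  rw [← aux_algebra q n d w hd hw1 hwn,
    ← aux_incl (fun x : Fin n → F => if cosetWeight C x ≤ 1 then (1 : ℤ) else 0) w _
      (aux_f q n k d hq C hk hmin hMDS hd)]
  simp only [← ite_and]
  rw [Finset.sum_boole, numVectorsCosetLe, Set.ncard_eq_toFinset_card']
  congr 2
  ext x
  simp
end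

section
/- Let C be an [n, k, d]_q MDS code with minimum distance d ≥ 3, and let w be a natural number with d - 1 ≤ w ≤ n. Then the overall number A_w^Σ(V^{(1)}) of Hamming-weight-w vectors lying in cosets of C of weight exactly 1 satisfies A_w^Σ(V^{(1)}) = C(n,w) · (q-1) · [ n · ∑_{j=0}^{w+1-d} (-1)^j C(w,j) q^{w+1-d-j} + ε · w · C(w-2, d-3) ], as an identity of integers. -/
open Finset

namespace MDSaux

variable {F : Type*} [Field F] [Fintype F] [DecidableEq F]

lemma norm_le_of_supp {n : ℕ} (x : Fin n → F) (S : Finset (Fin n))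
    (h : ∀ i, i ∉ S → x i = 0) : hammingNorm x ≤ S.card := by
  unfold hammingNorm
  apply Finset.card_le_card
  intro i hi
  by_contra hS
  simp at hi
  exact hi (h i hS)

lemma norm_single {n : ℕ} (i : Fin n) (a : F) (ha : a ≠ 0) :
    hammingNorm (Pi.single i a : Fin n → F) = 1 := by
  unfold hammingNorm
  rw [Finset.card_eq_one]
  refine ⟨i, ?_⟩
  ext j
  by_cases h : j = i
  · subst h; simp [ha]
  · simp [h]

lemma coset_one {n d : ℕ} (C : Submodule F (Fin n → F)) (hmin : HasMinDist C d) (hd : 3 ≤ d)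
    (x : Fin n → F) :
    cosetWeight C x = 1 ↔ ∃ c ∈ C, ∃ i : Fin n, ∃ a : F, a ≠ 0 ∧ c + Pi.single i a = x := by
  constructor
  · intro h
    have hne : {m : ℕ | ∃ c ∈ C, hammingNorm (x - c) = m}.Nonempty :=
      ⟨_, 0, C.zero_mem, rfl⟩
    have hm := Nat.sInf_mem hne
    unfold cosetWeight at h
    rw [h] at hm
    obtain ⟨c, hc, h1⟩ := hm
    unfold hammingNorm at h1
    obtain ⟨i, hi⟩ := Finset.card_eq_one.mp h1
    have key : ∀ j, (x - c) j ≠ 0 ↔ j = i := by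
      intro j
      have := Finset.ext_iff.mp hi j
      simpa using this
    refine ⟨c, hc, i, (x - c) i, (key i).mpr rfl, ?_⟩
    ext j
    by_cases hj : j = i
    · subst hj; simp
    · have := not_not.mp (fun hh => hj ((key j).mp hh))
      simp only [Pi.sub_apply] at this
      simp [hj]
      exact (sub_eq_zero.mp this).symm
  · rintro ⟨c, hc, i, a, ha, rfl⟩
    have h1 : cosetWeight C (c + Pi.single i a) ≤ 1 := by
      apply Nat.sInf_le
      exact ⟨c, hc, by simpa using norm_single i a ha⟩
    have h0 : cosetWeight C (c + Pi.single i a) ≠ 0 := by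
      intro h
      unfold cosetWeight at h
      rcases Nat.sInf_eq_zero.mp h with ⟨c', hc', h'⟩ | h
      · rw [hammingNorm_eq_zero, sub_eq_zero] at h'
        have hs : (Pi.single i a : Fin n → F) ∈ C := by
          have : (Pi.single i a : Fin n → F) = c' - c := by rw [← h']; simp
          rw [this]; exact C.sub_mem hc' hc
        have := hmin.1 _ hs (by simpa using ha)
        rw [norm_single i a ha] at this
        omega
      · have : hammingNorm (c + Pi.single i a - c) ∈
          {m : ℕ | ∃ c' ∈ C, hammingNorm (c + Pi.single i a - c') = m} := ⟨c, hc, rfl⟩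
        rw [h] at this
        exact this
    omega

lemma rep_unique {n d : ℕ} (C : Submodule F (Fin n → F)) (hmin : HasMinDist C d) (hd : 3 ≤ d)
    {c c' : Fin n → F} (hc : c ∈ C) (hc' : c' ∈ C) {i i' : Fin n} {a a' : F} (ha : a ≠ 0)
    (h : c + Pi.single i a = c' + Pi.single i' a') : c = c' ∧ i = i' ∧ a = a' := by
  have hcc : c - c' = 0 := by
    by_contra hne
    have h1 := hmin.1 _ (C.sub_mem hc hc') hne
    have h2 : hammingNorm (c - c') ≤ ({i, i'} : Finset (Fin n)).card := by
      apply norm_le_of_supp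
      intro j hj
      simp only [Finset.mem_insert, Finset.mem_singleton, not_or] at hj
      have := congrFun h j
      simp [hj.1, hj.2] at this
      simp [this]
    have := Finset.card_le_two (a := i) (b := i')
    omega
  have hcc := sub_eq_zero.mp hcc
  subst hcc
  have h := add_left_cancel h
  have hi : i = i' := by
    by_contra hi
    have := congrFun h i
    simp [hi] at this
    exact ha this
  subst hi
  refine ⟨rfl, rfl, ?_⟩
  simpa using congrFun h i

open Classical in
lemma count_big {n k d : ℕ} (C : Submodule F (Fin n → F))
    (hk : Module.finrank F C = k) (hmin : HasMinDist C d) (hMDS : d + k = n + 1)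
    (hd : 3 ≤ d) (S : Finset (Fin n)) (hS : d - 1 ≤ S.card) (y : Fin n → F) :
    (univ.filter (fun c : Fin n → F => c ∈ C ∧ ∀ i, i ∉ S → (c + y) i = 0)).card
      = Fintype.card F ^ (S.card - (d - 1)) := by
  obtain ⟨S0, hS0, hcard⟩ := Finset.exists_subset_card_eq hS
  let φ : C →ₗ[F] ({i // i ∉ S0} → F) :=
    (LinearMap.funLeft F F (Subtype.val : {i // i ∉ S0} → Fin n)).comp C.subtype
  have hinj : Function.Injective φ := by
    rw [← LinearMap.ker_eq_bot, LinearMap.ker_eq_bot']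
    intro c hc
    by_contra hne
    have h1 := hmin.1 c.1 c.2 (by simpa using hne)
    have h2 : hammingNorm c.1 ≤ S0.card := by
      apply norm_le_of_supp
      intro i hi
      exact congrFun hc ⟨i, hi⟩
    omega
  have hfr : Module.finrank F C = Module.finrank F ({i // i ∉ S0} → F) := by
    rw [hk, Module.finrank_fintype_fun_eq_card, Fintype.card_subtype_compl]
    simp [hcard]
    omega
  have hsurj := (LinearMap.injective_iff_surjective_of_finrank_eq_finrank hfr).mp hinj
  have : Fintype.card F ^ (S.card - (d - 1)) = (univ : Finset ({i // i ∈ S \ S0} → F)).card := by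
    rw [Finset.card_univ, Fintype.card_fun, Fintype.card_coe, Finset.card_sdiff_of_subset hS0, hcard]
  rw [this]
  apply Finset.card_bij (fun c _ => fun i : {i // i ∈ S \ S0} => c i.1)
  · intros; simp
  · intro c hc c' hc' h
    simp only [mem_filter, mem_univ, true_and] at hc hc'
    have : (⟨c, hc.1⟩ : C) = ⟨c', hc'.1⟩ := by
      apply hinj
      ext ⟨i, hi⟩
      change c i = c' i
      by_cases hiS : i ∈ S
      · exact congrFun h ⟨i, by simp [hi, hiS]⟩
      · have h1 := hc.2 i hiS
        have h2 := hc'.2 i hiS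
        simp only [Pi.add_apply] at h1 h2
        exact add_right_cancel (h1.trans h2.symm)
    exact congrArg Subtype.val this
  · intro z _
    obtain ⟨c, hc⟩ := hsurj (fun i => if h : i.1 ∈ S \ S0 then z ⟨i.1, h⟩ else - y i.1)
    refine ⟨c.1, ?_, ?_⟩
    · simp only [mem_filter, mem_univ, true_and]
      refine ⟨c.2, fun i hi => ?_⟩
      have h0 : i ∉ S0 := fun h => hi (hS0 h)
      have := congrFun hc ⟨i, h0⟩
      change c.1 i = _ at this
      simp [hi] at this
      simp [this]
    · ext ⟨i, hi⟩
      have h0 : i ∉ S0 := (Finset.mem_sdiff.mp hi).2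
      have := congrFun hc ⟨i, h0⟩
      change c.1 i = _ at this
      simp only [hi, dite_true] at this
      exact this

open Classical in
/-- Triples `(c, i, a)` representing the vectors `c + a e_i`. -/
noncomputable def trip {n : ℕ} (C : Submodule F (Fin n → F)) :
    Finset ((Fin n → F) × Fin n × F) :=
  univ.filter (fun t => t.1 ∈ C ∧ t.2.2 ≠ 0)

/-- The vector represented by a triple. -/
def val {n : ℕ} (t : (Fin n → F) × Fin n × F) : Fin n → F := t.1 + Pi.single t.2.1 t.2.2

/-- support -/
def supp {n : ℕ} (x : Fin n → F) : Finset (Fin n) := univ.filter (fun i => x i ≠ 0)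

lemma supp_sub {n : ℕ} (x : Fin n → F) (S : Finset (Fin n)) :
    supp x ⊆ S ↔ ∀ i, i ∉ S → x i = 0 := by
  unfold supp
  constructor
  · intro h i hi
    by_contra hx
    exact hi (h (by simp [hx]))
  · intro h i hi
    by_contra hS
    simp at hi
    exact hi (h i hS)

lemma card_pairs {n : ℕ} (S : Finset (Fin n)) :
    (((S ×ˢ (univ.filter (fun a : F => a ≠ 0))).card : ℕ) : ℤ)
      = S.card * ((Fintype.card F : ℤ) - 1) := by
  rw [Finset.card_product, Finset.filter_ne', Finset.card_erase_of_mem (mem_univ _),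
    Finset.card_univ]
  have : 1 ≤ Fintype.card F := Fintype.card_pos
  push_cast [this]
  ring

lemma trip_big {n k d : ℕ} (C : Submodule F (Fin n → F))
    (hk : Module.finrank F C = k) (hmin : HasMinDist C d) (hMDS : d + k = n + 1)
    (hd : 3 ≤ d) (S : Finset (Fin n)) (hS : d - 1 ≤ S.card) :
    (((trip C).filter (fun t => supp (val t) ⊆ S)).card : ℤ)
      = n * ((Fintype.card F : ℤ) - 1) * (Fintype.card F : ℤ) ^ (S.card - (d - 1)) := by
  classical
  have h1 := Finset.card_eq_sum_card_fiberwise (f := fun t : (Fin n → F) × Fin n × F => t.2)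
    (s := (trip C).filter (fun t => supp (val t) ⊆ S))
    (t := (univ : Finset (Fin n)) ×ˢ (univ.filter (fun a : F => a ≠ 0))) (by
      intro t ht
      simp [trip] at ht
      simp [ht.1.2])
  have h2 : ∀ p ∈ (univ : Finset (Fin n)) ×ˢ (univ.filter (fun a : F => a ≠ 0)),
      (((trip C).filter (fun t => supp (val t) ⊆ S)).filter (fun t => t.2 = p)).card
        = Fintype.card F ^ (S.card - (d - 1)) := by
    intro p hp
    rw [← count_big C hk hmin hMDS hd S hS (Pi.single p.1 p.2)]
    simp at hp
    apply Finset.card_bij (fun t _ => t.1)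
    · intro t ht
      simp only [mem_filter, trip, mem_univ, true_and, supp_sub, val] at ht
      obtain ⟨⟨⟨h1, h2⟩, h3⟩, rfl⟩ := ht
      simp only [mem_filter, mem_univ, true_and]
      exact ⟨h1, h3⟩
    · intro t ht t' ht' h
      simp only [mem_filter] at ht ht'
      exact Prod.ext h (ht.2.trans ht'.2.symm)
    · intro c hc
      simp only [mem_filter, mem_univ, true_and] at hc
      refine ⟨(c, p), ?_, rfl⟩
      simp only [mem_filter, trip, mem_univ, true_and, supp_sub, val]
      exact ⟨⟨⟨hc.1, hp⟩, hc.2⟩, trivial⟩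
  rw [h1, Finset.sum_congr rfl h2, Finset.sum_const, smul_eq_mul]
  push_cast
  rw [card_pairs]
  simp

lemma trip_small {n d : ℕ} (C : Submodule F (Fin n → F))
    (hmin : HasMinDist C d) (S : Finset (Fin n)) (hS : S.card + 2 ≤ d) :
    (((trip C).filter (fun t => supp (val t) ⊆ S)).card : ℤ)
      = S.card * ((Fintype.card F : ℤ) - 1) := by
  classical
  rw [← card_pairs, Nat.cast_inj]
  have key : ∀ t ∈ (trip C).filter (fun t => supp (val t) ⊆ S), t.1 = 0 ∧ t.2.1 ∈ S := by
    rintro ⟨c, i, a⟩ ht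
    simp only [mem_filter, trip, mem_univ, true_and, supp_sub, val] at ht
    obtain ⟨⟨hc, ha⟩, h⟩ := ht
    have hc0 : c = 0 := by
      by_contra hne
      have h1 := hmin.1 c hc hne
      have h2 : hammingNorm c ≤ (insert i S).card := by
        apply norm_le_of_supp
        intro j hj
        simp only [mem_insert, not_or] at hj
        have := h j hj.2
        simpa [hj.1] using this
      have := Finset.card_insert_le i S
      omega
    refine ⟨hc0, ?_⟩
    by_contra hi
    have := h i hi
    simp [hc0] at this
    exact ha this
  apply Finset.card_bij (fun t _ => t.2)
  · intro t ht
    have := key t ht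
    simp only [mem_filter, trip, mem_univ, true_and] at ht
    simp [this.2, ht.1.2]
  · intro t ht t' ht' h
    exact Prod.ext ((key t ht).1.trans (key t' ht').1.symm) h
  · rintro ⟨i, a⟩ hp
    simp at hp
    refine ⟨(0, i, a), ?_, rfl⟩
    simp only [mem_filter, trip, mem_univ, true_and, supp_sub, val]
    refine ⟨⟨C.zero_mem, hp.2⟩, fun j hj => ?_⟩
    have : j ≠ i := fun h => hj (h ▸ hp.1)
    simp [this]

lemma incl_excl {n : ℕ} {α : Type*} (A : Finset α) (f : α → Finset (Fin n))
    (T : Finset (Fin n)) :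
    ((A.filter (fun t => f t = T)).card : ℤ)
      = ∑ R ∈ T.powerset, (-1 : ℤ) ^ R.card * ((A.filter (fun t => f t ⊆ T \ R)).card : ℤ) := by
  simp only [Finset.card_filter, Nat.cast_sum, Finset.mul_sum]
  rw [Finset.sum_comm]
  apply Finset.sum_congr rfl
  intro t _
  by_cases hT : f t ⊆ T
  · have hsub : (T \ f t).powerset ⊆ T.powerset := Finset.powerset_mono.mpr Finset.sdiff_subset
    rw [← Finset.sum_subset hsub]
    · have : ∀ R ∈ (T \ f t).powerset, (-1 : ℤ) ^ R.card * ((if f t ⊆ T \ R then 1 else 0 : ℕ) : ℤ)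
          = (-1 : ℤ) ^ R.card := by
        intro R hR
        rw [if_pos]
        · simp
        · intro i hi
          rw [Finset.mem_powerset] at hR
          exact Finset.mem_sdiff.mpr ⟨hT hi, fun h => (Finset.mem_sdiff.mp (hR h)).2 hi⟩
      rw [Finset.sum_congr rfl this, Finset.sum_powerset_neg_one_pow_card]
      by_cases h : f t = T
      · simp [h]
      · rw [if_neg h, if_neg]
        · simp
        · intro h'
          exact h (Finset.Subset.antisymm hT (Finset.sdiff_eq_empty_iff_subset.mp h'))
    · intro R hR hR'
      rw [if_neg]
      · simp
      · intro h
        apply hR'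
        rw [Finset.mem_powerset] at hR ⊢
        intro i hi
        exact Finset.mem_sdiff.mpr ⟨hR hi, fun h' => (Finset.mem_sdiff.mp (h h')).2 hi⟩
  · rw [if_neg (fun h : f t = T => hT (h.le))]
    symm
    apply Finset.sum_eq_zero
    intro R _
    rw [if_neg (fun h => hT (h.trans Finset.sdiff_subset))]
    simp

lemma tail_sum (d w : ℕ) (hd : 3 ≤ d) (hw : d - 1 ≤ w) :
    ∑ j ∈ Finset.Ico (w + 2 - d) (w + 1), (-1 : ℤ) ^ j * (w.choose j : ℤ) * ((w - j : ℕ) : ℤ)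
      = (-1 : ℤ) ^ (w + d) * (w : ℤ) * ((w - 2).choose (d - 3) : ℤ) := by
  obtain ⟨e, rfl⟩ : ∃ e, d = e + 3 := ⟨d - 3, by omega⟩
  obtain ⟨v, rfl⟩ : ∃ v, w = v + e + 2 := ⟨w - (e + 2), by omega⟩
  have hterm : ∀ j ∈ Finset.range (v + e + 2 + 1),
      (-1 : ℤ) ^ j * ((v + e + 2).choose j : ℤ) * ((v + e + 2 - j : ℕ) : ℤ)
        = (v + e + 2 : ℕ) * ((-1 : ℤ) ^ j * ((v + e + 1).choose j : ℤ)) := by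
    intro j _
    have := Nat.choose_mul_succ_eq (v + e + 1) j
    have h2 : ((v + e + 1).choose j : ℤ) * ((v + e + 2 : ℕ) : ℤ)
      = ((v + e + 2).choose j : ℤ) * ((v + e + 2 - j : ℕ) : ℤ) := by exact_mod_cast this
    rw [mul_assoc, ← h2]; ring
  have e1 : v + e + 2 + 2 - (e + 3) = v + 1 := by omega
  have e2 : v + e + 2 - 2 = v + e := by omega
  have e3 : e + 3 - 3 = e := by omega
  rw [e1, e2, e3, Finset.sum_Ico_eq_sub _ (by omega), Finset.sum_congr rfl hterm,
    Finset.sum_congr rfl (fun j hj => hterm j (by simp at hj ⊢; omega)),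
    ← Finset.mul_sum, ← Finset.mul_sum, Int.alternating_sum_range_choose_eq_choose,
    Int.alternating_sum_range_choose_eq_choose,
    Nat.choose_eq_zero_of_lt (show v + e < v + e + 2 by omega)]
  have : (v + e).choose v = (v + e).choose e := by
    rw [← Nat.choose_symm_of_eq_add]; omega
  rw [this]
  have hs : (-1 : ℤ) ^ (v + e + 2 + (e + 3)) = - (-1) ^ v := by
    rw [show v + e + 2 + (e + 3) = v + 2 * (e + 2) + 1 by ring, pow_succ, pow_add, pow_mul]
    simp
  rw [hs]
  ring

lemma exact_supp {n k d w : ℕ} (C : Submodule F (Fin n → F))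
    (hk : Module.finrank F C = k) (hmin : HasMinDist C d) (hMDS : d + k = n + 1)
    (hd : 3 ≤ d) (hw1 : d - 1 ≤ w) (T : Finset (Fin n)) (hT : T.card = w) :
    (((trip C).filter (fun t => supp (val t) = T)).card : ℤ)
      = ((Fintype.card F : ℤ) - 1) *
        ((n : ℤ) * ∑ j ∈ Finset.range (w + 2 - d),
            (-1 : ℤ) ^ j * (w.choose j : ℤ) * (Fintype.card F : ℤ) ^ (w + 1 - d - j)
          + (-1 : ℤ) ^ (w + d) * (w : ℤ) * ((w - 2).choose (d - 3) : ℤ)) := by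
  rw [incl_excl]
  have h : ∀ R ∈ T.powerset, (-1 : ℤ) ^ R.card *
      (((trip C).filter (fun t => supp (val t) ⊆ T \ R)).card : ℤ)
      = (fun j : ℕ => (-1 : ℤ) ^ j * (if j < w + 2 - d then
          n * ((Fintype.card F : ℤ) - 1) * (Fintype.card F : ℤ) ^ (w + 1 - d - j)
        else ((w - j : ℕ) : ℤ) * ((Fintype.card F : ℤ) - 1))) R.card := by
    intro R hR
    rw [Finset.mem_powerset] at hR
    have hc : (T \ R).card = w - R.card := by rw [Finset.card_sdiff_of_subset hR, hT]
    have hle := Finset.card_le_card hR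
    simp only
    split_ifs with hj
    · rw [trip_big C hk hmin hMDS hd _ (by omega), hc]
      congr 3
      omega
    · rw [trip_small C hmin _ (by omega), hc]
  rw [Finset.sum_congr rfl h, Finset.sum_powerset_apply_card (fun j : ℕ => (-1 : ℤ) ^ j * (if j < w + 2 - d then
          n * ((Fintype.card F : ℤ) - 1) * (Fintype.card F : ℤ) ^ (w + 1 - d - j)
        else ((w - j : ℕ) : ℤ) * ((Fintype.card F : ℤ) - 1))), hT,
    ← Finset.sum_range_add_sum_Ico _ (show w + 2 - d ≤ w + 1 by omega), mul_add, ← tail_sum d w hd hw1,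
    Finset.mul_sum, Finset.mul_sum, Finset.mul_sum]
  congr 1
  · apply Finset.sum_congr rfl
    intro j hj
    rw [if_pos (Finset.mem_range.mp hj), nsmul_eq_mul]
    ring
  · apply Finset.sum_congr rfl
    intro j hj
    rw [if_neg (by simp at hj; omega), nsmul_eq_mul]
    ring

lemma count_trip {n d w : ℕ} (C : Submodule F (Fin n → F)) (hmin : HasMinDist C d)
    (hd : 3 ≤ d) :
    numVectorsCosetExact C w 1
      = ∑ T ∈ (univ : Finset (Fin n)).powersetCard w,
        ((trip C).filter (fun t => supp (val t) = T)).card := by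
  classical
  have hset : {x : Fin n → F | hammingNorm x = w ∧ cosetWeight C x = 1}
      = (((trip C).filter (fun t => hammingNorm (val t) = w)).image val : Finset (Fin n → F)) := by
    ext x
    simp only [Set.mem_setOf_eq, coe_image, Set.mem_image, mem_coe, mem_filter, trip, mem_univ,
      true_and, coset_one C hmin hd]
    constructor
    · rintro ⟨hx, c, hc, i, a, ha, h⟩
      exact ⟨(c, i, a), ⟨⟨hc, ha⟩, by rw [← hx, ← h]; rfl⟩, h⟩
    · rintro ⟨⟨c, i, a⟩, ⟨⟨hc, ha⟩, hx⟩, h⟩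
      exact ⟨by rw [← h]; exact hx, c, hc, i, a, ha, h⟩
  unfold numVectorsCosetExact
  rw [hset, Set.ncard_coe_finset, Finset.card_image_of_injOn]
  · rw [Finset.card_eq_sum_card_fiberwise (f := fun t => supp (val t))
      (t := (univ : Finset (Fin n)).powersetCard w)]
    · apply Finset.sum_congr rfl
      intro T hT
      rw [Finset.mem_powersetCard] at hT
      congr 1
      ext t
      simp only [mem_filter]
      constructor
      · rintro ⟨⟨h1, _⟩, h2⟩
        exact ⟨h1, h2⟩
      · rintro ⟨h1, h2⟩
        refine ⟨⟨h1, ?_⟩, h2⟩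
        rw [← hT.2, ← h2]
        rfl
    · intro t ht
      simp only [coe_filter, Set.mem_setOf_eq] at ht
      simp only [mem_coe, mem_powersetCard]
      exact ⟨subset_univ _, ht.2⟩
  · rintro ⟨c, i, a⟩ ht ⟨c', i', a'⟩ ht' h
    simp only [coe_filter, Set.mem_setOf_eq, trip, mem_filter, mem_univ, true_and] at ht ht'
    obtain ⟨rfl, rfl, rfl⟩ := rep_unique C hmin hd ht.1.1 ht'.1.1 ht.1.2 h
    rfl

end MDSaux

/-- **Integral weight spectrum of the weight-1 cosets of an MDS code** (Theorem 4.4(i),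
eq. (4.3)).  For an `[n,k,d]_q` MDS code with `d ≥ 3` and `d-1 ≤ w ≤ n`,
`A_w^Σ(V^{(1)}) = C(n,w)(q-1)[ n ∑_{j=0}^{w+1-d} (-1)^j C(w,j) q^{w+1-d-j}
  + (-1)^{w-d} w C(w-2,d-3) ]`. -/
theorem numVectorsCosetExact_one_eq {F : Type*} [Field F] [Fintype F] [DecidableEq F]
    (q n k d w : ℕ) (hq : Fintype.card F = q)
    (C : Submodule F (Fin n → F))
    (hk : Module.finrank F C = k) (hmin : HasMinDist C d) (hMDS : d + k = n + 1)
    (hd : 3 ≤ d) (hw1 : d - 1 ≤ w) (hwn : w ≤ n) :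
    (numVectorsCosetExact C w 1 : ℤ) =
      (n.choose w : ℤ) * ((q : ℤ) - 1) *
        ((n : ℤ) * ∑ j ∈ Finset.range (w + 2 - d),
            (-1 : ℤ) ^ j * (w.choose j : ℤ) * (q : ℤ) ^ (w + 1 - d - j)
          + (-1 : ℤ) ^ (w + d) * (w : ℤ) * ((w - 2).choose (d - 3) : ℤ)) := by
  subst hq
  rw [MDSaux.count_trip C hmin hd]
  push_cast
  rw [Finset.sum_congr rfl (fun T hT => MDSaux.exact_supp C hk hmin hMDS hd hw1 T
    (Finset.mem_powersetCard.mp hT).2), Finset.sum_const, Finset.card_powersetCard,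
    Finset.card_univ, Fintype.card_fin, nsmul_eq_mul]
  ring
end

section
/- Let C be an [n, k, d]_q MDS code with minimum distance d ≥ 3, and let w be a natural number with d - 1 ≤ w ≤ n. Then the overall number A_w^Σ(V^{(1)}) of Hamming-weight-w vectors lying in cosets of C of weight exactly 1 satisfies A_w^Σ(V^{(1)}) = n(q-1) · [ A_w(C) - ε · ( C(n,w) C(w-1, d-2) - C(n-1, w-1) C(w-2, d-3) ) ], as an identity of integers. -/
open Finset

lemma mds_aux_G {F : Type*} [Field F] [Fintype F] [DecidableEq F]
    (n k d : ℕ) (C : Submodule F (Fin n → F))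
    (hk : Module.finrank F C = k) (hmin : HasMinDist C d) (hMDS : d + k = n + 1)
    (hd : 3 ≤ d) (S : Finset (Fin n)) :
    {x : Fin n → F | x ∈ C ∧ ∀ i, i ∉ S → x i = 0}.ncard = Fintype.card F ^ (S.card + 1 - d) := by
  classical
  let r : C →ₗ[F] ((Sᶜ : Finset (Fin n)) → F) :=
    (LinearMap.funLeft F F (fun i : (Sᶜ : Finset (Fin n)) => (i : Fin n))) ∘ₗ C.subtype
  have hmem : ∀ c : C, c ∈ LinearMap.ker r ↔ ∀ i, i ∉ S → (c : Fin n → F) i = 0 := by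
    intro c
    rw [LinearMap.mem_ker, funext_iff]
    simp [r, LinearMap.funLeft_apply]
  have hcard : {x : Fin n → F | x ∈ C ∧ ∀ i, i ∉ S → x i = 0}.ncard
      = Nat.card (LinearMap.ker r) := by
    rw [← Nat.card_coe_set_eq]
    refine Nat.card_congr ⟨fun x => ⟨⟨x.1, x.2.1⟩, (hmem _).2 x.2.2⟩,
      fun c => ⟨c.1.1, c.1.2, (hmem _).1 c.2⟩, fun x => rfl, fun c => rfl⟩
  rw [hcard, Module.natCard_eq_pow_finrank (K := F), Nat.card_eq_fintype_card]
  congr 1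
  have hr := LinearMap.finrank_range_add_finrank_ker r
  have h1 : Module.finrank F (LinearMap.range r) ≤ n - S.card := by
    refine (Submodule.finrank_le _).trans ?_
    simp [Module.finrank_fintype_fun_eq_card, Finset.card_compl]
  have hSn : S.card ≤ n := by simpa using Finset.card_le_univ S
  obtain ⟨U, hUS, hU⟩ := Finset.exists_subset_card_eq (s := S) (n := S.card + 1 - d) (by omega)
  let p : LinearMap.ker r →ₗ[F] (U → F) :=
    (LinearMap.funLeft F F (fun i : U => (i : Fin n))) ∘ₗ C.subtype ∘ₗ (LinearMap.ker r).subtype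
  have hp : Function.Injective p := by
    intro a b hab
    by_contra hne
    have hne' : (a.1.1 - b.1.1 : Fin n → F) ≠ 0 := by
      intro h
      exact hne (Subtype.ext (Subtype.ext (sub_eq_zero.1 h)))
    have h2 := hmin.1 _ (C.sub_mem a.1.2 b.1.2) hne'
    have h3 : hammingNorm (a.1.1 - b.1.1 : Fin n → F) ≤ (S \ U).card := by
      apply Finset.card_le_card
      intro i hi
      rw [Finset.mem_filter] at hi
      rw [Finset.mem_sdiff]
      refine ⟨?_, fun hiU => hi.2 ?_⟩
      · by_contra hiS
        apply hi.2
        rw [Pi.sub_apply, (hmem _).1 a.2 i hiS, (hmem _).1 b.2 i hiS, sub_zero]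
      · exact sub_eq_zero.2 (congrFun hab ⟨i, hiU⟩)
    rw [Finset.card_sdiff_of_subset hUS] at h3
    omega
  have h4 := LinearMap.finrank_le_finrank_of_injective hp
  simp only [Module.finrank_fintype_fun_eq_card, Fintype.card_coe] at h4
  omega

/-- number of codewords with given support size -/
def mdsA (q d : ℕ) (w : ℕ) : ℤ := (fwdDiff 1)^[w] (fun s : ℕ => (q : ℤ) ^ (s + 1 - d)) 0

lemma mdsA_rec (q d w : ℕ) (hd : 3 ≤ d) (hw : 1 ≤ w) :
    mdsA q d (w + 1) = ((q : ℤ) - 1) * (mdsA q d w - (-1) ^ (w + d) * ((w - 1).choose (d - 2) : ℤ)) := by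
  have h : fwdDiff 1 (fun s : ℕ => (q : ℤ) ^ (s + 1 - d)) =
      ((q : ℤ) - 1) • ((fun s : ℕ => (q : ℤ) ^ (s + 1 - d)) - (fun s : ℕ => if s < d - 1 then (1 : ℤ) else 0)) := by
    ext s
    simp only [fwdDiff, Pi.smul_apply, Pi.sub_apply, smul_eq_mul]
    split_ifs with hs
    · rw [show s + 1 + 1 - d = 0 by omega, show s + 1 - d = 0 by omega]; simp
    · rw [show s + 1 + 1 - d = (s + 1 - d) + 1 by omega]; ring
  have h2 : (fwdDiff 1)^[w] (fun s : ℕ => if s < d - 1 then (1 : ℤ) else 0) 0 =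
      (-1) ^ (w + d) * ((w - 1).choose (d - 2) : ℤ) := by
    rw [fwdDiff_iter_eq_sum_shift]
    obtain ⟨w, rfl⟩ : ∃ v, w = v + 1 := ⟨w - 1, by omega⟩
    have h3 : ∀ e, ∑ x ∈ range (e + 1), (-1 : ℤ) ^ x * ((w + 1).choose x : ℤ) = (-1) ^ e * (w.choose e : ℤ) := by
      intro e
      induction e with
      | zero => simp
      | succ e ih => rw [sum_range_succ, ih, Nat.choose_succ_succ]; push_cast; ring
    have h4 : ∑ x ∈ range (w + 1 + 1), ((-1 : ℤ) ^ (w + 1 - x) * ((w + 1).choose x : ℤ)) • (if 0 + x • 1 < d - 1 then (1 : ℤ) else 0)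
       = ∑ x ∈ range (d - 2 + 1), (-1) ^ (w + 1) * ((-1 : ℤ) ^ x * ((w + 1).choose x : ℤ)) := by
      have e1 : ∀ x ∈ range (w + 1 + 1), ((-1 : ℤ) ^ (w + 1 - x) * ((w + 1).choose x : ℤ)) • (if 0 + x • 1 < d - 1 then (1 : ℤ) else 0)
        = if x < d - 1 then (-1) ^ (w + 1) * ((-1 : ℤ) ^ x * ((w + 1).choose x : ℤ)) else 0 := by
        intro x hx
        simp only [mem_range] at hx
        obtain ⟨y, hy⟩ : ∃ y, w + 1 = x + y := ⟨w + 1 - x, by omega⟩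
        simp only [smul_eq_mul, mul_one, zero_add]
        split_ifs
        · rw [hy, show x + y - x = y by omega, pow_add, mul_one, ← mul_assoc]
          congr 1
          have : ((-1 : ℤ) ^ x) * (-1) ^ x = 1 := by rw [← mul_pow]; simp
          linear_combination (-(-1 : ℤ) ^ y) * this
        · simp
      rw [sum_congr rfl e1, ← sum_filter]
      apply sum_subset_zero_on_sdiff
      · intro x; simp only [mem_filter, mem_range]; omega
      · intro x hx
        simp only [mem_sdiff, mem_filter, mem_range] at hx
        rw [Nat.choose_eq_zero_of_lt (by omega)]; simp
      · intros; rfl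
    rw [h4, ← mul_sum, h3]
    obtain ⟨e, rfl⟩ : ∃ e, d = e + 2 := ⟨d - 2, by omega⟩
    simp only [Nat.add_sub_cancel]
    ring
  unfold mdsA
  rw [Function.iterate_succ_apply, h, fwdDiff_iter_const_smul, Pi.smul_apply, ← h2, sub_eq_add_neg (fun s : ℕ => (q : ℤ) ^ (s + 1 - d)), fwdDiff_iter_add, ← neg_one_smul ℤ (fun s : ℕ => if s < d - 1 then (1 : ℤ) else 0), fwdDiff_iter_const_smul]
  simp [sub_eq_add_neg]

lemma mdsA_zero (q d w : ℕ) (hd : 3 ≤ d) (hw : 1 ≤ w) (hwd : w < d) : mdsA q d w = 0 := by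
  induction w with
  | zero => omega
  | succ w ih =>
    rcases Nat.eq_zero_or_pos w with rfl | h
    · simp only [mdsA, zero_add, Function.iterate_one, fwdDiff]
      rw [show 1 + 1 - d = 0 by omega, show 1 - d = 0 by omega]; simp
    · rw [mdsA_rec q d w hd h, ih h (by omega), Nat.choose_eq_zero_of_lt (by omega)]; simp

lemma mds_exact {F : Type*} [Field F] [Fintype F] [DecidableEq F]
    (n k d : ℕ) (C : Submodule F (Fin n → F))
    (hk : Module.finrank F C = k) (hmin : HasMinDist C d) (hMDS : d + k = n + 1)
    (hd : 3 ≤ d) (S : Finset (Fin n)) :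
    ({x : Fin n → F | x ∈ C ∧ univ.filter (fun i => x i ≠ 0) = S}.ncard : ℤ) =
      mdsA (Fintype.card F) d S.card := by
  classical
  induction S using Finset.strongInduction with
  | H S ih =>
    have hG := mds_aux_G n k d C hk hmin hMDS hd S
    have e1 : ({x : Fin n → F | x ∈ C ∧ ∀ i, i ∉ S → x i = 0}.ncard : ℤ) =
      ∑ T ∈ S.powerset, ({x : Fin n → F | x ∈ C ∧ univ.filter (fun i => x i ≠ 0) = T}.ncard : ℤ) := by
      simp only [Set.ncard_eq_toFinset_card']
      norm_cast
      rw [Finset.card_eq_sum_card_fiberwise (f := fun x : Fin n → F => univ.filter (fun i => x i ≠ 0)) (t := S.powerset)]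
      · refine sum_congr rfl fun T hT => ?_
        congr 1
        ext x
        simp only [mem_filter, Set.mem_toFinset, Set.mem_setOf_eq, mem_powerset] at hT ⊢
        refine ⟨fun h => ⟨h.1.1, h.2⟩, fun h => ⟨⟨h.1, fun i hi => ?_⟩, h.2⟩⟩
        by_contra h0
        exact hi (hT (h.2 ▸ by simpa using h0))
      · intro x hx
        simp only [Set.coe_toFinset, Set.mem_setOf_eq, coe_powerset, Set.mem_preimage, Set.mem_powerset_iff] at hx ⊢
        intro i hi
        by_contra h0
        simp at hi
        exact hi (hx.2 i h0)
    have e2 : ((Fintype.card F : ℤ)) ^ (S.card + 1 - d) = ∑ T ∈ S.powerset, mdsA (Fintype.card F) d T.card := by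
      have := shift_eq_sum_fwdDiff_iter 1 (fun s : ℕ => (Fintype.card F : ℤ) ^ (s + 1 - d)) S.card 0
      simp only [smul_eq_mul, mul_one, zero_add] at this
      rw [this, Finset.sum_powerset_apply_card (fun m => mdsA (Fintype.card F) d m)]
      simp [mdsA]
    rw [hG] at e1
    push_cast at e1
    rw [e2, ← Finset.add_sum_erase _ _ (Finset.mem_powerset_self S),
      ← Finset.add_sum_erase _ _ (Finset.mem_powerset_self S)] at e1
    have e3 : ∑ T ∈ S.powerset.erase S, mdsA (Fintype.card F) d T.card =
        ∑ T ∈ S.powerset.erase S,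
          ({x : Fin n → F | x ∈ C ∧ univ.filter (fun i => x i ≠ 0) = T}.ncard : ℤ) := by
      refine sum_congr rfl fun T hT => (ih T ?_).symm
      exact Finset.mem_ssubsets.1 hT
    linarith

lemma mds_A {F : Type*} [Field F] [Fintype F] [DecidableEq F]
    (n k d : ℕ) (C : Submodule F (Fin n → F))
    (hk : Module.finrank F C = k) (hmin : HasMinDist C d) (hMDS : d + k = n + 1)
    (hd : 3 ≤ d) (w : ℕ) :
    (numCodewordsOfWeight C w : ℤ) = (n.choose w : ℤ) * mdsA (Fintype.card F) d w := by
  classical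
  have e1 : (numCodewordsOfWeight C w : ℤ) = ∑ T ∈ (univ : Finset (Fin n)).powersetCard w,
      ({x : Fin n → F | x ∈ C ∧ univ.filter (fun i => x i ≠ 0) = T}.ncard : ℤ) := by
    unfold numCodewordsOfWeight
    simp only [Set.ncard_eq_toFinset_card']
    norm_cast
    rw [Finset.card_eq_sum_card_fiberwise (f := fun x : Fin n → F => univ.filter (fun i => x i ≠ 0))
      (t := (univ : Finset (Fin n)).powersetCard w)]
    · refine sum_congr rfl fun T hT => ?_
      congr 1
      ext x
      simp only [mem_filter, Set.mem_toFinset, Set.mem_setOf_eq, mem_powersetCard] at hT ⊢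
      refine ⟨fun h => ⟨h.1.1, h.2⟩, fun h => ⟨⟨h.1, ?_⟩, h.2⟩⟩
      rw [← hT.2, ← h.2]; rfl
    · intro x hx
      simp only [Set.coe_toFinset, Set.mem_setOf_eq] at hx
      simp only [mem_coe, mem_powersetCard, subset_univ, true_and]
      exact hx.2
  rw [e1, sum_congr rfl (g := fun _ => mdsA (Fintype.card F) d w)]
  · simp
  · intro T hT
    rw [mds_exact n k d C hk hmin hMDS hd T, (mem_powersetCard.1 hT).2]

lemma cosetWeight_one_iff {F : Type*} [Field F] [Fintype F] [DecidableEq F]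
    (n d : ℕ) (C : Submodule F (Fin n → F)) (hmin : HasMinDist C d) (hd : 3 ≤ d)
    (x : Fin n → F) :
    cosetWeight C x = 1 ↔ ∃ c ∈ C, ∃ i b, b ≠ c i ∧ x = Function.update c i b := by
  classical
  constructor
  · intro h
    have hne : {m : ℕ | ∃ c ∈ C, hammingNorm (x - c) = m}.Nonempty := ⟨_, 0, C.zero_mem, rfl⟩
    have := Nat.sInf_mem hne
    unfold cosetWeight at h
    rw [h] at this
    obtain ⟨c, hc, h1⟩ := this
    unfold hammingNorm at h1
    rw [Finset.card_eq_one] at h1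
    obtain ⟨i, hi⟩ := h1
    rw [Finset.ext_iff] at hi
    simp only [mem_filter, mem_univ, true_and, mem_singleton, Pi.sub_apply, sub_ne_zero] at hi
    refine ⟨c, hc, i, x i, (hi i).2 rfl, ?_⟩
    ext j
    by_cases hj : j = i
    · subst hj; simp
    · rw [Function.update_of_ne hj]
      by_contra h2
      exact hj ((hi j).1 h2)
  · rintro ⟨c, hc, i, b, hb, rfl⟩
    have h1 : hammingNorm (Function.update c i b - c) = 1 := by
      unfold hammingNorm
      rw [Finset.card_eq_one]
      refine ⟨i, ?_⟩
      ext j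
      simp only [mem_filter, mem_univ, true_and, mem_singleton, Pi.sub_apply, sub_ne_zero]
      by_cases hj : j = i
      · subst hj; simpa using hb
      · simp [Function.update_of_ne hj, hj]
    apply le_antisymm
    · exact Nat.sInf_le ⟨c, hc, h1⟩
    · rw [Nat.one_le_iff_ne_zero]
      intro h0
      have hne : {m : ℕ | ∃ c' ∈ C, hammingNorm (Function.update c i b - c') = m}.Nonempty :=
        ⟨_, 0, C.zero_mem, rfl⟩
      have := Nat.sInf_mem hne
      unfold cosetWeight at h0
      rw [h0] at this
      obtain ⟨c', hc', h2⟩ := this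
      rw [hammingNorm_eq_zero, sub_eq_zero] at h2
      rw [h2] at h1
      have h3 := hmin.1 (c' - c) (C.sub_mem hc' hc) (by
        intro h; rw [h] at h1; simp at h1)
      omega

lemma norm_update {F : Type*} [Field F] [DecidableEq F] {n : ℕ} (c : Fin n → F) (i : Fin n) (b : F) :
    hammingNorm (Function.update c i b) + (if c i = 0 then 0 else 1)
      = hammingNorm c + (if b = 0 then 0 else 1) := by
  classical
  have h : ∀ y : Fin n → F, hammingNorm y = (∑ j ∈ univ.erase i, if y j = 0 then 0 else 1)
      + (if y i = 0 then 0 else 1) := by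
    intro y
    rw [Finset.sum_erase_add _ _ (mem_univ i)]
    unfold hammingNorm
    rw [Finset.card_filter]
    refine sum_congr rfl fun j _ => ?_
    by_cases hj : y j = 0 <;> simp [hj]
  rw [h (Function.update c i b), h c, Function.update_self]
  rw [sum_congr rfl (g := fun j => if c j = 0 then 0 else 1)]
  · ring
  · intro j hj
    rw [Function.update_of_ne (ne_of_mem_erase hj)]

lemma count_fiber {F : Type*} [Field F] [Fintype F] [DecidableEq F] {n : ℕ} (w : ℕ) (hw : 1 ≤ w)
    (c : Fin n → F) (i : Fin n) :
    ((univ.filter (fun b : F => b ≠ c i ∧ hammingNorm (Function.update c i b) = w)).card : ℤ) =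
      if c i = 0 then (if hammingNorm c = w - 1 then (Fintype.card F : ℤ) - 1 else 0)
      else ((if hammingNorm c = w + 1 then 1 else 0) +
        (if hammingNorm c = w then (Fintype.card F : ℤ) - 2 else 0)) := by
  classical
  have hq : 2 ≤ Fintype.card F := Fintype.one_lt_card
  have hnu := norm_update c i
  by_cases h0 : c i = 0
  · simp only [h0, if_true] at hnu ⊢
    by_cases h1 : hammingNorm c = w - 1
    · have : (univ.filter (fun b : F => b ≠ 0 ∧ hammingNorm (Function.update c i b) = w)) = univ.erase 0 := by
        ext b
        have := hnu b
        simp only [mem_filter, mem_univ, true_and, mem_erase, and_true]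
        by_cases hb : b = 0
        · simp [hb]
        · simp only [hb, if_false] at this
          simp only [ne_eq, hb, not_false_eq_true, true_and, iff_true]; omega
      rw [this, if_pos h1, card_erase_of_mem (mem_univ _), card_univ]
      push_cast [Nat.cast_sub (show 1 ≤ Fintype.card F by omega)]; rfl
    · rw [if_neg h1]
      norm_cast
      rw [card_eq_zero, filter_eq_empty_iff]
      rintro b - ⟨hb, h⟩
      have := hnu b
      simp only [hb, if_false] at this
      omega
  · simp only [h0, if_false] at hnu ⊢
    by_cases h1 : hammingNorm c = w + 1
    · have : (univ.filter (fun b : F => b ≠ c i ∧ hammingNorm (Function.update c i b) = w)) = {0} := by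
        ext b
        have := hnu b
        simp only [mem_filter, mem_univ, true_and, mem_singleton]
        by_cases hb : b = 0
        · simp only [hb, if_true] at this ⊢
          simp only [ne_eq, iff_true]
          exact ⟨fun h => h0 h.symm, by omega⟩
        · simp only [hb, if_false, iff_false] at this ⊢
          omega
      rw [this, if_pos h1, if_neg (by omega)]; simp
    · by_cases h2 : hammingNorm c = w
      · have : (univ.filter (fun b : F => b ≠ c i ∧ hammingNorm (Function.update c i b) = w)) =
            (univ.erase 0).erase (c i) := by
          ext b
          have := hnu b
          simp only [mem_filter, mem_univ, true_and, mem_erase, and_true]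
          by_cases hb : b = 0
          · simp only [hb, if_true] at this ⊢
            simp only [ne_eq, not_true, and_false, iff_false]
            omega
          · simp only [hb, if_false] at this
            simp only [ne_eq, hb, not_false_eq_true, and_true]
            refine and_iff_left ?_
            omega
        rw [this, if_neg h1, if_pos h2, card_erase_of_mem (by simp [h0]),
          card_erase_of_mem (mem_univ _), card_univ]
        omega
      · rw [if_neg h1, if_neg h2]
        norm_cast
        rw [add_zero, card_eq_zero, filter_eq_empty_iff]
        rintro b - ⟨hb, h⟩
        have := hnu b
        split_ifs at this <;> omega

lemma count_sum {F : Type*} [Field F] [Fintype F] [DecidableEq F] {n : ℕ} (w : ℕ) (hw : 1 ≤ w)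
    (c : Fin n → F) :
    ∑ i, ((univ.filter (fun b : F => b ≠ c i ∧ hammingNorm (Function.update c i b) = w)).card : ℤ) =
      (if hammingNorm c = w - 1 then ((n : ℤ) - w + 1) * ((Fintype.card F : ℤ) - 1) else 0)
      + (if hammingNorm c = w + 1 then (w + 1 : ℤ) else 0) +
        (if hammingNorm c = w then (w : ℤ) * ((Fintype.card F : ℤ) - 2) else 0) := by
  classical
  rw [sum_congr rfl (fun i _ => count_fiber w hw c i), Finset.sum_ite, sum_const, sum_const]
  have h1 : (univ.filter (fun i => ¬ c i = 0)).card = hammingNorm c := rfl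
  have h2 : (univ.filter (fun i => c i = 0)).card + (univ.filter (fun i => ¬ c i = 0)).card = n := by
    rw [Finset.card_filter_add_card_filter_not]; simp
  rw [h1] at h2 ⊢
  have h3 : ((univ.filter (fun i => c i = 0)).card : ℤ) = n - hammingNorm c := by omega
  rw [nsmul_eq_mul, nsmul_eq_mul, h3]
  by_cases a1 : hammingNorm c = w - 1
  · have : (hammingNorm c : ℤ) = w - 1 := by omega
    rw [if_pos a1, if_pos a1, if_neg (by omega), if_neg (by omega), if_neg (by omega), if_neg (by omega), this]
    ring
  · by_cases a2 : hammingNorm c = w + 1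
    · rw [if_neg a1, if_neg a1, if_pos a2, if_pos a2, if_neg (by omega), if_neg (by omega), a2]
      push_cast; ring
    · by_cases a3 : hammingNorm c = w
      · rw [if_neg a1, if_neg a1, if_neg a2, if_neg a2, if_pos a3, if_pos a3, a3]
        ring
      · simp [a1, a2, a3]

lemma count_N {F : Type*} [Field F] [Fintype F] [DecidableEq F]
    (n d : ℕ) (C : Submodule F (Fin n → F)) (hmin : HasMinDist C d) (hd : 3 ≤ d)
    (w : ℕ) (hw : 1 ≤ w) :
    (numVectorsCosetExact C w 1 : ℤ) =
      ((n : ℤ) - w + 1) * ((Fintype.card F : ℤ) - 1) * numCodewordsOfWeight C (w - 1)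
      + (w + 1) * numCodewordsOfWeight C (w + 1)
      + w * ((Fintype.card F : ℤ) - 2) * numCodewordsOfWeight C w := by
  classical
  let P : Finset (Σ _ : (Fin n → F), Σ _ : Fin n, F) :=
    (univ.filter (fun c : Fin n → F => c ∈ C)).sigma fun c => univ.sigma fun i =>
      univ.filter (fun b : F => b ≠ c i ∧ hammingNorm (Function.update c i b) = w)
  have hA : ∀ v, numCodewordsOfWeight C v
      = ((univ.filter (fun c : Fin n → F => c ∈ C)).filter (fun c => hammingNorm c = v)).card := by
    intro v
    unfold numCodewordsOfWeight
    rw [Set.ncard_eq_toFinset_card']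
    congr 1
    ext x; simp
  have hP : numVectorsCosetExact C w 1 = P.card := by
    unfold numVectorsCosetExact
    rw [Set.ncard_eq_toFinset_card']
    symm
    refine Finset.card_bij (fun p _ => Function.update p.1 p.2.1 p.2.2) ?_ ?_ ?_
    · rintro ⟨c, i, b⟩ h
      simp only [P, mem_sigma, mem_filter, mem_univ, true_and] at h
      simp only [Set.mem_toFinset, Set.mem_setOf_eq]
      exact ⟨h.2.2, (cosetWeight_one_iff n d C hmin hd _).2 ⟨c, h.1, i, b, h.2.1, rfl⟩⟩
    · rintro ⟨c, i, b⟩ h ⟨c', i', b'⟩ h' he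
      simp only [P, mem_sigma, mem_filter, mem_univ, true_and] at h h' he
      have hcc : c = c' := by
        by_contra hne
        have h1 := hmin.1 (c - c') (C.sub_mem h.1 h'.1) (sub_ne_zero.2 hne)
        have h2 : hammingNorm (c - c') ≤ ({i, i'} : Finset (Fin n)).card := by
          apply card_le_card
          intro j hj
          simp only [mem_filter, mem_univ, true_and, Pi.sub_apply, sub_ne_zero] at hj
          by_contra hj'
          simp only [mem_insert, mem_singleton, not_or] at hj'
          have := congrFun he j
          rw [Function.update_of_ne hj'.1, Function.update_of_ne hj'.2] at this
          exact hj this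
        have h3 : ({i, i'} : Finset (Fin n)).card ≤ 2 := card_le_two
        omega
      subst hcc
      have hii : i = i' := by
        by_contra hne
        have := congrFun he i
        rw [Function.update_self, Function.update_of_ne hne] at this
        exact h.2.1 this
      subst hii
      have := congrFun he i
      rw [Function.update_self, Function.update_self] at this
      subst this
      rfl
    · intro x hx
      simp only [Set.mem_toFinset, Set.mem_setOf_eq] at hx
      obtain ⟨c, hc, i, b, hb, rfl⟩ := (cosetWeight_one_iff n d C hmin hd _).1 hx.2
      refine ⟨⟨c, i, b⟩, ?_, rfl⟩
      simp only [P, mem_sigma, mem_filter, mem_univ, true_and]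
      exact ⟨hc, hb, hx.1⟩
  rw [hP]
  simp only [P, card_sigma]
  push_cast
  rw [sum_congr rfl (fun c _ => count_sum w hw c), sum_add_distrib, sum_add_distrib,
    ← sum_filter, ← sum_filter, ← sum_filter, sum_const, sum_const, sum_const, ← hA, ← hA, ← hA]
  simp only [nsmul_eq_mul]
  ring

/-- **Integral weight spectrum of the weight-1 cosets of an MDS code** (Theorem 4.4(i),
eq. (4.7)).  For an `[n,k,d]_q` MDS code with `d ≥ 3` and `d-1 ≤ w ≤ n`,
`A_w^Σ(V^{(1)}) = n(q-1)[ A_w(C) - (-1)^{w-d}( C(n,w)C(w-1,d-2) - C(n-1,w-1)C(w-2,d-3) ) ]`. -/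
theorem numVectorsCosetExact_one_eq' {F : Type*} [Field F] [Fintype F] [DecidableEq F]
    (q n k d w : ℕ) (hq : Fintype.card F = q)
    (C : Submodule F (Fin n → F))
    (hk : Module.finrank F C = k) (hmin : HasMinDist C d) (hMDS : d + k = n + 1)
    (hd : 3 ≤ d) (hw1 : d - 1 ≤ w) (hwn : w ≤ n) :
    (numVectorsCosetExact C w 1 : ℤ) =
      (n : ℤ) * ((q : ℤ) - 1) *
        ((numCodewordsOfWeight C w : ℤ)
          - (-1 : ℤ) ^ (w + d) *
            ((n.choose w : ℤ) * ((w - 1).choose (d - 2) : ℤ)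
              - ((n - 1).choose (w - 1) : ℤ) * ((w - 2).choose (d - 3) : ℤ))) := by
  subst hq
  have hkn : k ≤ n := by omega
  rw [count_N n d C hmin hd w (by omega)]
  rw [mds_A n k d C hk hmin hMDS hd, mds_A n k d C hk hmin hMDS hd, mds_A n k d C hk hmin hMDS hd]
  obtain ⟨v, rfl⟩ : ∃ v, w = v + 2 := ⟨w - 2, by omega⟩
  obtain ⟨m, rfl⟩ : ∃ m, n = m + 1 := ⟨n - 1, by omega⟩
  obtain ⟨e, rfl⟩ : ∃ e, d = e + 3 := ⟨d - 3, by omega⟩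
  have r1 := mdsA_rec (Fintype.card F) (e + 3) (v + 2) hd (by omega)
  have r2 := mdsA_rec (Fintype.card F) (e + 3) (v + 1) hd (by omega)
  simp only [show v + 2 - 1 = v + 1 by omega, show v + 2 - 2 = v by omega, show v + 1 - 1 = v by omega,
    show m + 1 - 1 = m by omega, show e + 3 - 2 = e + 1 by omega, show e + 3 - 3 = e by omega,
    show v + 1 + 1 = v + 2 by omega] at r1 r2 ⊢
  have c1 : ((v : ℤ) + 2 + 1) * ((m + 1).choose (v + 2 + 1) : ℤ) = (m + 1) * (m.choose (v + 2) : ℤ) := by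
    have := Nat.add_one_mul_choose_eq m (v + 2)
    zify at this
    linarith
  have c2 : ((v : ℤ) + 2) * ((m + 1).choose (v + 2) : ℤ) = (m + 1) * (m.choose (v + 1) : ℤ) := by
    have := Nat.add_one_mul_choose_eq m (v + 1)
    zify at this
    linarith
  have c4 : ((m + 1).choose (v + 2) : ℤ) = m.choose (v + 1) + m.choose (v + 2) := by
    rw [Nat.choose_succ_succ]; push_cast; rfl
  have c3 : ((m : ℤ) - v) * ((m + 1).choose (v + 1) : ℤ) = (m + 1) * (m.choose (v + 1) : ℤ) := by
    have := Nat.choose_mul_succ_eq m (v + 1)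
    zify [show v + 1 ≤ m + 1 by omega] at this
    linarith
  have c5 : ((v + 1).choose (e + 1) : ℤ) = v.choose e + v.choose (e + 1) := by
    rw [Nat.choose_succ_succ]; push_cast; rfl
  push_cast
  generalize (Fintype.card F : ℤ) = Q at *
  generalize mdsA (Fintype.card F) (e + 3) (v + 2 + 1) = f3 at *
  generalize mdsA (Fintype.card F) (e + 3) (v + 2) = f2 at *
  generalize mdsA (Fintype.card F) (e + 3) (v + 1) = f1 at *
  have s1 : (-1 : ℤ) ^ (v + 1 + (e + 3)) = - (-1 : ℤ) ^ (v + 2 + (e + 3)) := by ring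
  rw [s1] at r2
  generalize (-1 : ℤ) ^ (v + 2 + (e + 3)) = ε at *
  linear_combination (Q - 1) * f1 * c3 + f3 * c1 + (Q - 2) * f2 * c2
    + (m + 1) * (m.choose (v + 2) : ℤ) * r1 - (m + 1) * (m.choose (v + 1) : ℤ) * r2
    - (m + 1) * (Q - 1) * (f2 - ε * ((v + 1).choose (e + 1) : ℤ)) * c4
    + (m + 1) * (Q - 1) * ε * (m.choose (v + 1) : ℤ) * c5
end

section
/- Let C be a [q+1, q-3, 5]_q MDS code of length n = q+1 and minimum distance d = 5, and let w be a natural number with 4 ≤ w ≤ q+1. Then the overall number A_w^Σ(V^{(1)}) of Hamming-weight-w vectors lying in cosets of C of weight exactly 1 satisfies A_w^Σ(V^{(1)}) = (q^2 - 1) · [ A_w(C) - ε · ( C(q+1, w) C(w-1, 3) - C(q, w-1) C(w-2, 2) ) ], as an identity of integers, where ε = (-1)^{w-5}. -/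
open Finset

/-- Number of codewords with a prescribed support of size `w`, as a forward difference. -/
def BB (q : ℤ) (w : ℕ) : ℤ := (fwdDiff 1)^[w] (fun s : ℕ => q ^ (s - 4)) 0

lemma BB_sum (q : ℤ) (s : ℕ) : ∑ k ∈ range (s+1), (s.choose k : ℤ) * BB q k = q ^ (s-4) := by
  have := shift_eq_sum_fwdDiff_iter 1 (fun s : ℕ => q ^ (s - 4)) s 0
  simp only [nsmul_eq_mul, zero_add, smul_eq_mul, mul_one] at this
  exact this.symm

lemma BB_rec (q : ℤ) (w : ℕ) (hw : 3 ≤ w) :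
    BB q (w+1) = (q-1) * BB q w + (q-1) * (-1)^w * ((w-1).choose 3 : ℤ) := by
  have h1 : BB q (w+1) = (fwdDiff 1)^[w] (fun s : ℕ => q ^ (s - 4)) 1 - BB q w := by
    unfold BB
    rw [Function.iterate_succ_apply']
    simp [fwdDiff]
  have h2 : (fwdDiff 1)^[w] (fun s : ℕ => q ^ (s - 4)) 1 - q * BB q w =
      ∑ k ∈ range (w+1), (-1)^(w-k) * (w.choose k : ℤ) * (q ^ (1 + k - 4) - q * q ^ (k-4)) := by
    unfold BB
    rw [fwdDiff_iter_eq_sum_shift, fwdDiff_iter_eq_sum_shift, mul_sum, ← sum_sub_distrib]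
    apply sum_congr rfl
    intro k _
    simp only [smul_eq_mul, mul_one, zero_add]
    ring
  have h3 : ∑ k ∈ range (w+1), (-1)^(w-k) * (w.choose k : ℤ) * (q ^ (1 + k - 4) - q * q ^ (k-4))
      = ∑ k ∈ range (3+1), (-1)^(w-k) * (w.choose k : ℤ) * (q ^ (1 + k - 4) - q * q ^ (k-4)) := by
    symm
    apply sum_subset
    · intro k; simp; omega
    · intro k _ hk
      simp at hk
      obtain ⟨m, rfl⟩ := Nat.exists_eq_add_of_le hk
      have e1 : 1 + (4 + m) - 4 = m + 1 := by omega
      have e2 : 4 + m - 4 = m := by omega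
      rw [e1, e2]; ring
  have h4 := @Int.alternating_sum_range_choose_eq_choose (w-1) 3
  rw [Nat.sub_add_cancel (by omega)] at h4
  have h5 : ∑ k ∈ range (3+1), (-1)^(w-k) * (w.choose k : ℤ) * (q ^ (1 + k - 4) - q * q ^ (k-4))
      = (1 - q) * (-1)^w * ∑ k ∈ range (3+1), (-1)^k * (w.choose k : ℤ) := by
    rw [mul_sum]
    apply sum_congr rfl
    intro k hk
    simp at hk
    have e1 : 1 + k - 4 = 0 := by omega
    have e2 : k - 4 = 0 := by omega
    have e3 : (-1 : ℤ)^w = (-1)^(w-k) * (-1)^k := by rw [← pow_add]; congr 1; omega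
    have e4 : (-1 : ℤ)^k * (-1)^k = 1 := by rw [← mul_pow]; simp
    rw [e1, e2, e3]
    linear_combination (-(1-q) * (-1)^(w-k) * (w.choose k : ℤ)) * e4
  rw [h3, h5, h4] at h2
  linear_combination h1 + h2

lemma uniq_powerset {α : Type*} [DecidableEq α] (N : Finset α → ℤ) (B : ℕ → ℤ) 
   (h : ∀ S : Finset α, ∑ T ∈ S.powerset, N T = ∑ k ∈ range (#S+1), ((#S).choose k : ℤ) * B k) (S : Finset α) : N S = B (#S) := by
  induction S using Finset.strongInduction with
  | H S ih =>
    have h1 := h S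
    have h2 := Finset.sum_powerset_apply_card (fun k => B k) (x := S)
    simp only [nsmul_eq_mul] at h2
    rw [← h2, ← Finset.insert_erase (Finset.mem_powerset_self S), sum_insert (by simp), sum_insert (by simp)] at h1
    have : ∑ T ∈ S.powerset.erase S, N T = ∑ T ∈ S.powerset.erase S, B (#T) := by
      apply sum_congr rfl
      intro T hT
      simp at hT
      exact ih T (hT.2.ssubset_of_ne hT.1)
    linarith

section
variable {F : Type*} [Field F] [Fintype F] [DecidableEq F] 

lemma hn_update {n : ℕ} (c : Fin n → F) (i : Fin n) (b : F) :
    hammingNorm (Function.update c i b) + (if c i = 0 then 0 else 1) = hammingNorm c + (if b = 0 then 0 else 1) := by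
  have key : ∀ x : Fin n → F, hammingNorm x = (if x i = 0 then 0 else 1) + ∑ j ∈ univ.erase i, (if x j = 0 then 0 else 1) := by
    intro x
    rw [Finset.add_sum_erase _ (fun j => if x j = 0 then 0 else 1) (mem_univ i)]
    simp [hammingNorm, Finset.card_filter]
  rw [key, key c]
  have : ∑ j ∈ univ.erase i, (if Function.update c i b j = 0 then 0 else 1) = ∑ j ∈ univ.erase i, (if c j = 0 then 0 else 1) := by
    apply sum_congr rfl
    intro j hj
    simp at hj
    simp [hj]
  rw [this]
  simp
  omega

lemma hn_sub_update {n : ℕ} (c : Fin n → F) (i : Fin n) (b : F) (hb : b ≠ c i) :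
    hammingNorm (Function.update c i b - c) = 1 := by
  have := hn_update (0 : Fin n → F) i (b - c i)
  simp [sub_ne_zero.2 hb] at this
  rw [← this]
  congr 1
  ext j
  by_cases h : j = i
  · subst h; simp
  · simp [h]

lemma cosetWeight_one {n : ℕ} (C : Submodule F (Fin n → F)) (hmin : ∀ c ∈ C, c ≠ 0 → 5 ≤ hammingNorm c) (x : Fin n → F) :
    cosetWeight C x = 1 ↔ ∃ c ∈ C, ∃ i b, b ≠ c i ∧ Function.update c i b = x := by
  constructor
  · intro h
    have hne : {m : ℕ | ∃ c ∈ C, hammingNorm (x - c) = m}.Nonempty := ⟨_, 0, C.zero_mem, rfl⟩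
    have := Nat.sInf_mem hne
    change cosetWeight C x ∈ _ at this
    rw [h] at this
    obtain ⟨c, hc, h1⟩ := this
    unfold hammingNorm at h1
    obtain ⟨i, hi⟩ := Finset.card_eq_one.1 h1
    refine ⟨c, hc, i, x i, ?_, ?_⟩
    · have : i ∈ ({i} : Finset (Fin n)) := by simp
      rw [← hi] at this
      simpa [sub_ne_zero] using this
    · ext j
      by_cases hj : j = i
      · subst hj; simp
      · have : j ∉ ({i} : Finset (Fin n)) := by simpa using hj
        rw [← hi] at this
        simp [sub_eq_zero] at this
        simp [hj, this]
  · rintro ⟨c, hc, i, b, hb, rfl⟩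
    have h1 := hn_sub_update c i b hb
    have hle : cosetWeight C (Function.update c i b) ≤ 1 := Nat.sInf_le ⟨c, hc, h1⟩
    by_contra h
    have h0 : cosetWeight C (Function.update c i b) = 0 := by omega
    have hne : {m : ℕ | ∃ c' ∈ C, hammingNorm (Function.update c i b - c') = m}.Nonempty := ⟨_, 0, C.zero_mem, rfl⟩
    have := Nat.sInf_mem hne
    change cosetWeight C (Function.update c i b) ∈ _ at this
    rw [h0] at this
    obtain ⟨c', hc', h2⟩ := this
    rw [hammingNorm_eq_zero, sub_eq_zero] at h2
    have := hmin _ (C.sub_mem (h2 ▸ hc' : Function.update c i b ∈ C) hc) (by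
      intro h; rw [h] at h1; simp at h1)
    omega

lemma upd_inj {n : ℕ} (C : Submodule F (Fin n → F)) (hmin : ∀ c ∈ C, c ≠ 0 → 5 ≤ hammingNorm c)
    (c c' : Fin n → F) (hc : c ∈ C) (hc' : c' ∈ C) (i i' : Fin n) (b b' : F) (hb : b ≠ c i) (hb' : b' ≠ c' i')
    (h : Function.update c i b = Function.update c' i' b') : c = c' ∧ i = i' ∧ b = b' := by
  have hcc : c = c' := by
    by_contra hne
    have h5 := hmin _ (C.sub_mem hc hc') (sub_ne_zero.2 hne)
    have h1 := hn_sub_update c i b hb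
    have h2 := hn_sub_update c' i' b' hb'
    have e : ∀ x y : Fin n → F, hammingDist x y = hammingNorm (x - y) := by
      intro x y
      simp [hammingDist, hammingNorm, sub_eq_zero]
    have h3 := hammingDist_triangle c (Function.update c i b) c'
    rw [hammingDist_comm c (Function.update c i b), e, e, e] at h3
    rw [← h] at h2
    omega
  subst hcc
  have hii : i = i' := by
    by_contra hne
    have := congrFun h i
    simp [hne] at this
    exact hb this
  subst hii
  have := congrFun h i
  simp at this
  exact ⟨rfl, rfl, this⟩

lemma card_shortened (q : ℕ) (hq : Fintype.card F = q)
    (C : Submodule F (Fin (q + 1) → F)) (hk : Module.finrank F C + 3 = q)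
    (hmin : ∀ c ∈ C, c ≠ 0 → 5 ≤ hammingNorm c) (S : Finset (Fin (q+1))) :
    {c : Fin (q+1) → F | c ∈ C ∧ ∀ i, i ∉ S → c i = 0}.ncard = q ^ (#S - 4) := by
  classical
  -- vanishing off a small set
  have hvan : ∀ c ∈ C, ∀ U : Finset (Fin (q+1)), #U ≤ 4 → (∀ i, i ∉ U → c i = 0) → c = 0 := by
    intro c hc U hU h
    by_contra hne
    have h5 := hmin c hc hne
    have : hammingNorm c ≤ #U := by
      apply card_le_card
      intro i hi
      simp at hi
      by_contra h'
      exact hi (h i h')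
    omega
  rcases le_total (#S) 4 with hS | hS
  · have : {c : Fin (q+1) → F | c ∈ C ∧ ∀ i, i ∉ S → c i = 0} = {0} := by
      ext c
      simp only [Set.mem_setOf_eq, Set.mem_singleton_iff]
      constructor
      · rintro ⟨hc, h⟩; exact hvan c hc S hS h
      · rintro rfl; simp
    rw [this]
    simp [Nat.sub_eq_zero_of_le hS]
  · obtain ⟨U, hUS, hU⟩ := Finset.exists_subset_card_eq hS
    let ρ : C →ₗ[F] ({i // i ∉ U} → F) :=
      (LinearMap.funLeft F F (Subtype.val : {i // i ∉ U} → Fin (q+1))) ∘ₗ C.subtype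
    have hinj : Function.Injective ρ := by
      rw [← LinearMap.ker_eq_bot, LinearMap.ker_eq_bot']
      rintro ⟨c, hc⟩ h
      have := hvan c hc U hU.le (fun i hi => congrFun h ⟨i, hi⟩)
      simpa using this
    have hdim : Module.finrank F C = Module.finrank F ({i // i ∉ U} → F) := by
      rw [Module.finrank_fintype_fun_eq_card, Fintype.card_subtype_compl]
      simp [hU]
      omega
    have hsurj : Function.Surjective ρ :=
      (LinearMap.injective_iff_surjective_of_finrank_eq_finrank hdim).1 hinj
    have hcard : Nat.card ({i // i ∈ S \ U} → F) = q ^ (#S - 4) := by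
      rw [Nat.card_eq_fintype_card, Fintype.card_fun, Fintype.card_coe, card_sdiff_of_subset hUS, hU, hq]
    rw [← hcard, ← Nat.card_coe_set_eq]
    apply Nat.card_eq_of_bijective (fun c i => c.1 i.1)
    constructor
    · rintro ⟨c, hc, h⟩ ⟨c', hc', h'⟩ heq
      have : c - c' = 0 := by
        apply hvan _ (C.sub_mem hc hc') U hU.le
        intro i hi
        by_cases hiS : i ∈ S
        · have := congrFun heq ⟨i, by simp [hi, hiS]⟩
          simpa [sub_eq_zero] using this
        · simp [h i hiS, h' i hiS]
      simpa [sub_eq_zero] using this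
    · intro y
      obtain ⟨⟨c, hc⟩, h⟩ := hsurj (fun i => if hi : i.1 ∈ S \ U then y ⟨i.1, hi⟩ else 0)
      refine ⟨⟨c, hc, ?_⟩, ?_⟩
      · intro i hi
        have hiU : i ∉ U := fun h => hi (hUS h)
        have := congrFun h ⟨i, hiU⟩
        simp [hi] at this
        exact this
      · ext ⟨i, hi⟩
        have hiU : i ∉ U := (mem_sdiff.1 hi).2
        have := congrFun h ⟨i, hiU⟩
        simp only [hi, dif_pos] at this
        exact this

lemma weight_enum (q : ℕ) (hq : Fintype.card F = q)
    (C : Submodule F (Fin (q + 1) → F)) (hk : Module.finrank F C + 3 = q)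
    (hmin : ∀ c ∈ C, c ≠ 0 → 5 ≤ hammingNorm c) (w : ℕ) :
    (numCodewordsOfWeight C w : ℤ) = ((q+1).choose w : ℤ) * BB q w := by
  classical
  let supp : (Fin (q+1) → F) → Finset (Fin (q+1)) := fun c => {i | c i ≠ 0}
  let K : Finset (Fin (q+1) → F) := {c | c ∈ C}
  have hN : ∀ S : Finset (Fin (q+1)), ((#{c ∈ K | supp c = S} : ℕ) : ℤ) = BB q (#S) := by
    intro S
    refine uniq_powerset (fun S => ((#{c ∈ K | supp c = S} : ℕ) : ℤ)) (BB q) ?_ S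
    intro S
    rw [BB_sum]
    have h1 := card_shortened q hq C hk hmin S
    have h2 : {c : Fin (q+1) → F | c ∈ C ∧ ∀ i, i ∉ S → c i = 0} = (({c ∈ K | supp c ∈ S.powerset} : Finset _) : Set _) := by
      ext c
      simp only [Set.mem_setOf_eq, coe_filter, K, supp, mem_filter, mem_univ, true_and, mem_powerset, subset_iff]
      simp only [not_imp_comm, ne_eq]
    rw [h2, Set.ncard_coe_finset] at h1
    rw [Finset.card_eq_sum_card_fiberwise (f := supp) (t := S.powerset)] at h1
    · rw [← Nat.cast_pow, ← h1, Nat.cast_sum]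
      apply sum_congr rfl
      intro T hT
      congr 2
      ext c
      simp only [mem_filter]
      constructor
      · rintro ⟨a, rfl⟩; exact ⟨⟨a, hT⟩, rfl⟩
      · rintro ⟨⟨a, _⟩, rfl⟩; exact ⟨a, rfl⟩
    · intro c hc
      simp only [coe_filter, Set.mem_setOf_eq] at hc
      exact hc.2
  have h2 : {x : Fin (q+1) → F | x ∈ C ∧ hammingNorm x = w} = (({c ∈ K | supp c ∈ powersetCard w univ} : Finset _) : Set _) := by
    ext c
    simp [K, supp, hammingNorm]
  unfold numCodewordsOfWeight
  rw [h2, Set.ncard_coe_finset, Finset.card_eq_sum_card_fiberwise (f := supp) (t := powersetCard w univ)]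
  · rw [Nat.cast_sum]
    trans ∑ T ∈ powersetCard w (univ : Finset (Fin (q+1))), BB q w
    · apply sum_congr rfl
      intro T hT
      have := hN T
      rw [(mem_powersetCard.1 hT).2] at this
      rw [← this]
      congr 2
      ext c
      simp only [mem_filter]
      constructor
      · rintro ⟨⟨a, _⟩, rfl⟩; exact ⟨a, rfl⟩
      · rintro ⟨a, rfl⟩; exact ⟨⟨a, hT⟩, rfl⟩
    · simp
  · intro c hc
    simp only [coe_filter, Set.mem_setOf_eq] at hc
    exact hc.2

lemma inner_count {n : ℕ} (c : Fin n → F) (i : Fin n) (w : ℕ) (hw : 1 ≤ w) :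
    ((#{b : F | b ≠ c i ∧ hammingNorm (Function.update c i b) = w} : ℕ) : ℤ) =
      if c i = 0 then (if hammingNorm c = w - 1 then (Fintype.card F : ℤ) - 1 else 0)
      else (if hammingNorm c = w then (Fintype.card F : ℤ) - 2 else 0) +
        (if hammingNorm c = w + 1 then 1 else 0) := by
  have hc1 : 1 ≤ Fintype.card F := Fintype.card_pos
  by_cases h0 : c i = 0
  · have hset : ({b : F | b ≠ c i ∧ hammingNorm (Function.update c i b) = w} : Finset F) =
        if hammingNorm c = w - 1 then univ.erase 0 else ∅ := by
      ext b
      have := hn_update c i b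
      by_cases hb : b = 0
      · split_ifs <;> simp [h0, hb]
      · simp only [h0, hb, if_true, if_false] at this
        split_ifs with h <;> simp [h0, hb] <;> omega
    rw [hset]
    simp only [h0, if_true]
    split_ifs
    · rw [card_erase_of_mem (mem_univ _), card_univ]; push_cast [hc1]; rfl
    · simp
  · have hc2 : 2 ≤ Fintype.card F := Fintype.one_lt_card
    have hset : ({b : F | b ≠ c i ∧ hammingNorm (Function.update c i b) = w} : Finset F) =
        if hammingNorm c = w then (univ.erase 0).erase (c i) else if hammingNorm c = w + 1 then {0} else ∅ := by
      ext b
      have := hn_update c i b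
      by_cases hb : b = 0
      · simp only [h0, hb, if_true, if_false] at this
        subst hb
        split_ifs <;> simp [Ne.symm h0] <;> omega
      · simp only [h0, hb, if_false] at this
        split_ifs <;> simp [hb] <;> omega
    rw [hset]
    simp only [h0, if_false]
    split_ifs
    · omega
    · rw [card_erase_of_mem (by simp [h0]), card_erase_of_mem (mem_univ _), card_univ]; omega
    · simp
    · simp

lemma outer_count {n : ℕ} (c : Fin n → F) (w : ℕ) (hw : 1 ≤ w) :
    ∑ i, ((#{b : F | b ≠ c i ∧ hammingNorm (Function.update c i b) = w} : ℕ) : ℤ) =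
      (if hammingNorm c = w - 1 then ((n : ℤ) - w + 1) * ((Fintype.card F : ℤ) - 1) else 0)
      + (if hammingNorm c = w then (w : ℤ) * ((Fintype.card F : ℤ) - 2) else 0) +
        (if hammingNorm c = w + 1 then (w : ℤ) + 1 else 0) := by
  simp_rw [inner_count c _ w hw]
  rw [Finset.sum_ite]
  have h2 : #{i | ¬ c i = 0} = hammingNorm c := rfl
  have h1 : #{i | c i = 0} + hammingNorm c = n := by
    rw [← h2, Finset.card_filter_add_card_filter_not]; simp
  simp only [sum_const, h2, nsmul_eq_mul]
  have h3 : (#{i | c i = 0} : ℤ) = n - hammingNorm c := by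
    omega
  rw [h3]
  split_ifs with a b d d b d d <;> first | omega | skip
  · rw [a]; push_cast [hw]; ring
  · rw [b]; ring

lemma count_one {n : ℕ} (C : Submodule F (Fin n → F))
    (hmin : ∀ c ∈ C, c ≠ 0 → 5 ≤ hammingNorm c) (w : ℕ) (hw : 1 ≤ w) :
    (numVectorsCosetExact C w 1 : ℤ) =
      ((n : ℤ) - w + 1) * ((Fintype.card F : ℤ) - 1) * numCodewordsOfWeight C (w-1)
      + (w : ℤ) * ((Fintype.card F : ℤ) - 2) * numCodewordsOfWeight C w
      + ((w : ℤ) + 1) * numCodewordsOfWeight C (w+1) := by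
  classical
  let K : Finset (Fin n → F) := {c | c ∈ C}
  have hA : ∀ v, numCodewordsOfWeight C v = #{c ∈ K | hammingNorm c = v} := by
    intro v
    unfold numCodewordsOfWeight
    rw [← Set.ncard_coe_finset]
    congr 1
    ext c; simp [K]
  let P : Finset (Σ _ : (Fin n → F), Σ _ : Fin n, F) :=
    K.sigma (fun c => univ.sigma (fun i => {b : F | b ≠ c i ∧ hammingNorm (Function.update c i b) = w}))
  have hP : numVectorsCosetExact C w 1 = #P := by
    have : {x : Fin n → F | hammingNorm x = w ∧ cosetWeight C x = 1} =
        ((P.image (fun p => Function.update p.1 p.2.1 p.2.2) : Finset _) : Set _) := by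
      ext x
      simp only [Set.mem_setOf_eq, cosetWeight_one C hmin, coe_image, Set.mem_image, mem_coe]
      constructor
      · rintro ⟨h1, c, hc, i, b, hb, rfl⟩
        exact ⟨⟨c, i, b⟩, by simp [P, K, hc, hb, h1], rfl⟩
      · rintro ⟨⟨c, i, b⟩, hp, rfl⟩
        simp [P, K] at hp
        exact ⟨hp.2.2, c, hp.1, i, b, hp.2.1, rfl⟩
    unfold numVectorsCosetExact
    rw [this, Set.ncard_coe_finset, card_image_of_injOn]
    rintro ⟨c, i, b⟩ hp ⟨c', i', b'⟩ hp' h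
    simp [P, K] at hp hp'
    obtain ⟨rfl, rfl, rfl⟩ := upd_inj C hmin c c' hp.1 hp'.1 i i' b b' hp.2.1 hp'.2.1 h
    rfl
  rw [hP, card_sigma, Nat.cast_sum]
  simp_rw [card_sigma, Nat.cast_sum, outer_count _ w hw]
  rw [sum_add_distrib, sum_add_distrib, hA, hA, hA]
  simp only [← sum_filter, sum_const, nsmul_eq_mul]
  ring

end

/-- **Integral weight spectrum of the weight-1 cosets of a `[q+1, q-3, 5]_q` MDS code**
(Theorem 4.4(iii), eq. (4.9)).  For a `[q+1,q-3,5]_q` MDS code and `4 ≤ w ≤ q+1`,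
`A_w^Σ(V^{(1)}) = (q²-1)[ A_w(C) - (-1)^{w-5}( C(q+1,w)C(w-1,3) - C(q,w-1)C(w-2,2) ) ]`. -/
theorem numVectorsCosetExact_one_dist_five {F : Type*} [Field F] [Fintype F] [DecidableEq F]
    (q w : ℕ) (hq : Fintype.card F = q)
    (C : Submodule F (Fin (q + 1) → F))
    (hk : Module.finrank F C + 3 = q) (hmin : HasMinDist C 5)
    (hw1 : 4 ≤ w) (hwn : w ≤ q + 1) :
    (numVectorsCosetExact C w 1 : ℤ) =
      ((q : ℤ) ^ 2 - 1) *
        ((numCodewordsOfWeight C w : ℤ)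
          - (-1 : ℤ) ^ (w + 5) *
            (((q + 1).choose w : ℤ) * ((w - 1).choose 3 : ℤ)
              - (q.choose (w - 1) : ℤ) * ((w - 2).choose 2 : ℤ))) := by
  have hm := hmin.1
  rw [count_one C hm w (by omega), weight_enum q hq C hk hm, weight_enum q hq C hk hm,
    weight_enum q hq C hk hm, hq]
  obtain ⟨u, rfl⟩ := Nat.exists_eq_add_of_le' hw1
  have r1 := BB_rec q (u+3) (by omega)
  have r2 := BB_rec q (u+4) (by omega)
  have e1 : u + 4 - 1 = u + 3 := by omega
  have e2 : u + 4 - 2 = u + 2 := by omega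
  have e3 : u + 3 - 1 = u + 2 := by omega
  rw [e1, e2]
  rw [e3] at r1
  rw [e1] at r2
  have c1 : ((q+1).choose (u+3+1) : ℤ) * ((u : ℤ) + 4) = (q+1).choose (u+3) * ((q : ℤ) + 1 - (u + 3)) := by
    have := Nat.choose_succ_right_eq (q+1) (u+3)
    zify [show u + 3 ≤ q + 1 by omega] at this
    linear_combination this
  have c2 : ((q+1).choose (u+4+1) : ℤ) * ((u : ℤ) + 5) = (q+1).choose (u+4) * ((q : ℤ) + 1 - (u + 4)) := by
    have := Nat.choose_succ_right_eq (q+1) (u+4)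
    zify [hwn] at this
    linear_combination this
  have c3 : ((q : ℤ) + 1) * q.choose (u+3) = (q+1).choose (u+4) * ((u : ℤ) + 4) := by
    have := Nat.add_one_mul_choose_eq q (u+3)
    zify at this
    linear_combination this
  have c4 : ((u+3).choose 3 : ℤ) = (u+2).choose 2 + (u+2).choose 3 := by
    exact_mod_cast Nat.choose_succ_succ (u+2) 2
  have s1 : (-1 : ℤ) ^ (u + 4 + 5) = - (-1)^u := by
    rw [show u + 4 + 5 = u + 9 by ring, pow_add]; norm_num
  have s2 : (-1 : ℤ) ^ (u + 3) = - (-1)^u := by rw [pow_add]; norm_num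
  have s3 : (-1 : ℤ) ^ (u + 4) = (-1)^u := by rw [pow_add]; norm_num
  rw [s2] at r1
  rw [s3] at r2
  rw [s1]
  simp only [show u + 3 + 1 = u + 4 from rfl] at *
  push_cast
  generalize (-1 : ℤ)^u = s at *
  generalize BB (q:ℤ) (u+3) = B3 at *
  generalize BB (q:ℤ) (u+4) = B4 at *
  generalize BB (q:ℤ) (u+4+1) = B5 at *
  generalize (((q+1).choose (u+3) : ℕ) : ℤ) = x3 at *
  generalize (((q+1).choose (u+4) : ℕ) : ℤ) = x4 at *
  generalize (((q+1).choose (u+4+1) : ℕ) : ℤ) = x5 at *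
  generalize ((q.choose (u+3) : ℕ) : ℤ) = y at *
  generalize (((u+3).choose 3 : ℕ) : ℤ) = z at *
  generalize (((u+2).choose 3 : ℕ) : ℤ) = z' at *
  generalize (((u+2).choose 2 : ℕ) : ℤ) = z2 at *
  subst c4
  subst r2
  linear_combination (-((q:ℤ)-1) * B3) * c1 + (((q:ℤ)-1)*B4 + ((q:ℤ)-1)*s*(z2+z')) * c2
    - ((q:ℤ)-1) * s * z2 * (-c3) - ((u:ℤ)+4) * x4 * r1
end

section
/- Let C be an [n, k, d]_q MDS code with minimum distance d ≥ 3, and let w be a natural number with d - 1 ≤ w ≤ n. Then the overall number A_w^Σ(V^{≤1}) of Hamming-weight-w vectors lying in cosets of C of weight at most 1 satisfies A_w^Σ(V^{≤1}) = A_w(C) · (1 + n(q-1)) - ε · n(q-1) · [ C(n, w) C(w-1, d-2) - C(n-1, w-1) C(w-2, d-3) ], as an identity of integers (here 1 + n(q-1) = V_n(1) is the volume of a Hamming sphere of radius 1 in F_q^n). -/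
open Finset

theorem aux_step (h : ℕ → ℤ) (s : ℕ) :
    ∑ j ∈ Finset.range (s + 2), ((s + 1).choose j : ℤ) * h j
      = ∑ j ∈ Finset.range (s + 1), (s.choose j : ℤ) * h j
        + ∑ j ∈ Finset.range (s + 1), (s.choose j : ℤ) * h (j + 1) := by
  exact Finset.sum_choose_succ_mul (fun i _ => h i) s

theorem aux_D (s m : ℕ) :
    ∑ j ∈ Finset.range (s + 1), (s.choose j : ℤ) * ((-1) ^ j * (j.choose m : ℤ))
      = if s = m then (-1) ^ m else 0 := by
  induction s generalizing m with
  | zero => cases m <;> simp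
  | succ s ih =>
    rw [aux_step]
    cases m with
    | zero =>
      rw [← Finset.sum_add_distrib]
      simp only [Nat.choose_zero_right]
      rw [if_neg (by omega)]
      apply Finset.sum_eq_zero
      intro j _
      rw [pow_succ]; ring
    | succ m =>
      have h1 : ∀ j ∈ Finset.range (s + 1), (s.choose j : ℤ) * ((-1) ^ (j + 1) * ((j + 1).choose (m + 1) : ℤ))
          = - ((s.choose j : ℤ) * ((-1) ^ j * (j.choose m : ℤ)))
            - (s.choose j : ℤ) * ((-1) ^ j * (j.choose (m + 1) : ℤ)) := by
        intro j _
        rw [Nat.choose_succ_succ, pow_succ]; push_cast; ring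
      rw [Finset.sum_congr rfl h1, Finset.sum_sub_distrib, Finset.sum_neg_distrib, ih, ih]
      by_cases h : s = m
      · simp [h, pow_succ]
      · simp [h]

/-- auxiliary shifted sequence -/
def auxE (m : ℕ) : ℕ → ℤ
  | 0 => 0
  | j + 1 => (-1) ^ (j + 1) * (j.choose m : ℤ)

theorem aux_K (s m : ℕ) :
    ∑ j ∈ Finset.range (s + 1), (s.choose j : ℤ) * auxE m j
      = if m < s then (-1) ^ (m + 1) else 0 := by
  induction s with
  | zero => simp [auxE]
  | succ s ih =>
    rw [aux_step, ih]
    have h1 : ∀ j ∈ Finset.range (s + 1), (s.choose j : ℤ) * auxE m (j + 1)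
          = - ((s.choose j : ℤ) * ((-1) ^ j * (j.choose m : ℤ))) := by
      intro j _
      simp only [auxE, pow_succ]; ring
    rw [Finset.sum_congr rfl h1, Finset.sum_neg_distrib, aux_D]
    rcases lt_trichotomy s m with h | h | h
    · rw [if_neg (by omega), if_neg (by omega), if_neg (by omega)]; simp
    · rw [if_neg (by omega), if_pos h, if_pos (by omega)]; ring
    · rw [if_pos h, if_neg (by omega), if_pos (by omega)]; simp

/-- number of codewords with a given support of size `j` in an MDS code with `d = m + 2` -/
def auxA (q : ℤ) (m : ℕ) : ℕ → ℤ
  | 0 => 1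
  | j + 1 => (q - 1) * auxA q m j + (-1) ^ (m + 1) * (q - 1) * auxE m j
      - (q - 1) * (if j = 0 then 1 else 0)

theorem aux_G (q : ℤ) (s m : ℕ) :
    ∑ j ∈ Finset.range (s + 1), (s.choose j : ℤ) * auxA q m j = q ^ (s + 1 - (m + 2)) := by
  induction s with
  | zero => simp [auxA]
  | succ s ih =>
    rw [aux_step, ih]
    have h1 : ∀ j ∈ Finset.range (s + 1), (s.choose j : ℤ) * auxA q m (j + 1)
          = (q - 1) * ((s.choose j : ℤ) * auxA q m j)
            + (-1) ^ (m + 1) * (q - 1) * ((s.choose j : ℤ) * auxE m j)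
            - (q - 1) * (if j = 0 then 1 else 0) := by
      intro j _
      rw [auxA]
      by_cases h : j = 0
      · subst h; simp
      · simp only [h, if_false]; ring
    rw [Finset.sum_congr rfl h1, Finset.sum_sub_distrib, Finset.sum_add_distrib,
      ← Finset.mul_sum, ← Finset.mul_sum, ← Finset.mul_sum, ih, aux_K]
    have h2 : ∑ j ∈ Finset.range (s + 1), (if j = 0 then (1:ℤ) else 0) = 1 := by
      simp
    rw [h2]
    by_cases h : m < s
    · rw [if_pos h]
      have e : s + 1 + 1 - (m + 2) = (s + 1 - (m + 2)) + 1 := by omega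
      have e2 : ((-1 : ℤ) ^ (m + 1)) * (-1) ^ (m + 1) = 1 := by
        rw [← mul_pow]; simp
      rw [e, pow_succ]
      linear_combination (q - 1) * e2
    · rw [if_neg h]
      have e : s + 1 + 1 - (m + 2) = 0 := by omega
      have e' : s + 1 - (m + 2) = 0 := by omega
      rw [e, e']; ring

section
open Classical

variable {F : Type*} [Field F] [Fintype F] [DecidableEq F] {n : ℕ}

/-- support -/
noncomputable def auxSupp (c : Fin n → F) : Finset (Fin n) := Finset.univ.filter (fun i => c i ≠ 0)

theorem auxSupp_card (c : Fin n → F) : (auxSupp c).card = hammingNorm c := by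
  unfold auxSupp hammingNorm; congr

theorem aux_card_sub (C : Submodule F (Fin n → F)) (d k : ℕ) (hk : Module.finrank F C = k)
    (hmin : HasMinDist C d) (hMDS : d + k = n + 1) (hd : 1 ≤ d) (S : Finset (Fin n)) :
    (Finset.univ.filter (fun c : Fin n → F => c ∈ C ∧ auxSupp c ⊆ S)).card
      = Fintype.card F ^ (S.card + 1 - d) := by
  have hz : ∀ c ∈ C, (auxSupp c).card < d → c = 0 := by
    intro c hc h
    by_contra h0
    have := hmin.1 c hc h0
    rw [auxSupp_card] at h
    omega
  by_cases hS : S.card < d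
  · have e : S.card + 1 - d = 0 := by omega
    rw [e, pow_zero, Finset.card_eq_one]
    refine ⟨0, ?_⟩
    ext c
    simp only [Finset.mem_filter, Finset.mem_univ, true_and, Finset.mem_singleton]
    constructor
    · rintro ⟨hc, h⟩
      exact hz c hc (lt_of_le_of_lt (Finset.card_le_card h) hS)
    · rintro rfl
      exact ⟨C.zero_mem, by simp [auxSupp]⟩
  · obtain ⟨S', hS', hcard⟩ := Finset.exists_subset_card_eq (s := S) (n := d - 1) (by omega)
    have hzS : ∀ c ∈ C, (∀ i, i ∉ S' → c i = 0) → c = 0 := by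
      intro c hc h
      apply hz c hc
      have : auxSupp c ⊆ S' := by
        intro i hi
        by_contra hn
        simp only [auxSupp, Finset.mem_filter] at hi
        exact hi.2 (h i hn)
      have := Finset.card_le_card this
      omega
    let R : C →ₗ[F] ({i // i ∉ S'} → F) :=
      { toFun := fun c i => c.1 i.1
        map_add' := fun _ _ => rfl
        map_smul' := fun _ _ => rfl }
    have hRinj : Function.Injective R := by
      rw [← LinearMap.ker_eq_bot, LinearMap.ker_eq_bot']
      intro c hc
      apply Subtype.ext
      exact hzS c.1 c.2 (fun i hi => congrFun hc ⟨i, hi⟩)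
    have hsur : Function.Surjective R := by
      apply (LinearMap.injective_iff_surjective_of_finrank_eq_finrank _).1 hRinj
      rw [hk, Module.finrank_fintype_fun_eq_card, Fintype.card_subtype_compl]
      simp [hcard]
      omega
    have hb : (Finset.univ.filter (fun c : Fin n → F => c ∈ C ∧ auxSupp c ⊆ S)).card
        = (Finset.univ : Finset (↥(S \ S') → F)).card := by
      apply Finset.card_bij (fun c _ => fun i => c i.1)
      · intros; simp
      · intro c hc c' hc' h
        simp only [Finset.mem_filter, Finset.mem_univ, true_and] at hc hc'
        have : c - c' = 0 := by
          apply hzS _ (C.sub_mem hc.1 hc'.1)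
          intro i hi
          by_cases hiS : i ∈ S
          · have := congrFun h ⟨i, by simp [hi, hiS]⟩
            simpa [sub_eq_zero] using this
          · have h1 : c i = 0 := by
              by_contra h; exact hiS (hc.2 (by simp [auxSupp, h]))
            have h2 : c' i = 0 := by
              by_contra h; exact hiS (hc'.2 (by simp [auxSupp, h]))
            simp [h1, h2]
        exact sub_eq_zero.1 this
      · intro f _
        obtain ⟨c, hc⟩ := hsur (fun i => if h : i.1 ∈ S \ S' then f ⟨i.1, h⟩ else 0)
        refine ⟨c.1, ?_, ?_⟩
        · simp only [Finset.mem_filter, Finset.mem_univ, true_and]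
          refine ⟨c.2, ?_⟩
          intro i hi
          by_contra hiS
          simp only [auxSupp, Finset.mem_filter] at hi
          apply hi.2
          have := congrFun hc ⟨i, fun h => hiS (hS' h)⟩
          simpa [R, hiS] using this
        · funext i
          have hi := Finset.mem_sdiff.1 i.2
          have := congrFun hc ⟨i.1, hi.2⟩
          simpa [R, hi.1, hi.2] using this
    rw [hb, Finset.card_univ, Fintype.card_fun, Fintype.card_coe, Finset.card_sdiff_of_subset hS',
      hcard]
    congr 1
    omega

theorem aux_f_s8 (C : Submodule F (Fin n → F)) (m k : ℕ) (hk : Module.finrank F C = k)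
    (hmin : HasMinDist C (m + 2)) (hMDS : m + 2 + k = n + 1) (S : Finset (Fin n)) :
    ((Finset.univ.filter (fun c : Fin n → F => c ∈ C ∧ auxSupp c = S)).card : ℤ)
      = auxA (Fintype.card F) m S.card := by
  induction S using Finset.strongInduction with
  | H S ih =>
    have h1 := aux_card_sub C (m + 2) k hk hmin hMDS (by omega) S
    have h2 : (Finset.univ.filter (fun c : Fin n → F => c ∈ C ∧ auxSupp c ⊆ S)).card
        = ∑ T ∈ S.powerset, (Finset.univ.filter (fun c : Fin n → F => c ∈ C ∧ auxSupp c = T)).card := by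
      rw [Finset.card_eq_sum_card_fiberwise (f := auxSupp) (t := S.powerset)]
      · apply Finset.sum_congr rfl
        intro T hT
        rw [Finset.mem_powerset] at hT
        congr 1
        ext c
        simp only [Finset.mem_filter, Finset.mem_univ, true_and]
        constructor
        · rintro ⟨⟨a, b⟩, e⟩; exact ⟨a, e⟩
        · rintro ⟨a, e⟩; exact ⟨⟨a, e ▸ hT⟩, e⟩
      · intro c hc
        simp at hc
        simp [hc.2]
    have h3 := aux_G (Fintype.card F) S.card m
    have h4 : ∑ T ∈ S.powerset, auxA (Fintype.card F) m T.card
        = (Fintype.card F : ℤ) ^ (S.card + 1 - (m + 2)) := by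
      rw [Finset.sum_powerset_apply_card (fun j => auxA (Fintype.card F) m j), ← h3]
      simp
    have h5 : (∑ T ∈ S.powerset,
        ((Finset.univ.filter (fun c : Fin n → F => c ∈ C ∧ auxSupp c = T)).card : ℤ))
        = (Fintype.card F : ℤ) ^ (S.card + 1 - (m + 2)) := by
      rw [← Nat.cast_sum, ← h2, h1]; push_cast; rfl
    have hmem : S ∈ S.powerset := Finset.mem_powerset_self S
    rw [← Finset.add_sum_erase _ _ hmem] at h4 h5
    have h6 : ∑ T ∈ S.powerset.erase S,
        ((Finset.univ.filter (fun c : Fin n → F => c ∈ C ∧ auxSupp c = T)).card : ℤ)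
        = ∑ T ∈ S.powerset.erase S, auxA (Fintype.card F) m T.card := by
      apply Finset.sum_congr rfl
      intro T hT
      rw [Finset.mem_erase, Finset.mem_powerset] at hT
      exact ih T (lt_of_le_of_ne hT.2 hT.1)
    rw [h6] at h5
    linarith

theorem aux_num (C : Submodule F (Fin n → F)) (w : ℕ) :
    numCodewordsOfWeight C w
      = (Finset.univ.filter (fun c : Fin n → F => c ∈ C ∧ hammingNorm c = w)).card := by
  unfold numCodewordsOfWeight
  rw [← Set.ncard_coe_finset]
  congr 1
  ext c
  simp

theorem aux_Aw (C : Submodule F (Fin n → F)) (m k w : ℕ) (hk : Module.finrank F C = k)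
    (hmin : HasMinDist C (m + 2)) (hMDS : m + 2 + k = n + 1) :
    (numCodewordsOfWeight C w : ℤ) = (n.choose w : ℤ) * auxA (Fintype.card F) m w := by
  rw [aux_num, Finset.card_eq_sum_card_fiberwise (f := auxSupp)
    (t := Finset.powersetCard w Finset.univ)]
  · push_cast
    rw [Finset.sum_congr rfl (g := fun _ => auxA (Fintype.card F) m w)]
    · simp
    · intro T hT
      rw [Finset.mem_powersetCard] at hT
      have := aux_f_s8 C m k hk hmin hMDS T
      rw [hT.2] at this
      rw [← this]
      congr 2
      ext c
      simp only [Finset.mem_filter, Finset.mem_univ, true_and]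
      constructor
      · rintro ⟨⟨a, b⟩, e⟩; exact ⟨a, e⟩
      · rintro ⟨a, e⟩
        refine ⟨⟨a, ?_⟩, e⟩
        rw [← auxSupp_card, e, hT.2]
  · intro c hc
    simp at hc
    simp [Finset.mem_powersetCard, auxSupp_card, hc.2]

theorem aux_norm_sum (c : Fin n → F) :
    hammingNorm c = ∑ j, if c j ≠ 0 then 1 else 0 := by
  rw [← auxSupp_card, auxSupp, Finset.card_filter]

theorem aux_norm_update (c : Fin n → F) (i : Fin n) (a : F) :
    hammingNorm (Function.update c i a) + (if c i ≠ 0 then 1 else 0)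
      = hammingNorm c + (if a ≠ 0 then 1 else 0) := by
  rw [aux_norm_sum, aux_norm_sum, ← Finset.add_sum_erase _ _ (Finset.mem_univ i),
    ← Finset.add_sum_erase _ (fun j => if c j ≠ 0 then 1 else 0) (Finset.mem_univ i)]
  rw [Finset.sum_congr rfl (g := fun j => if c j ≠ 0 then 1 else 0)]
  · simp only [Function.update_self]; ring
  · intro j hj
    rw [Function.update_of_ne (Finset.ne_of_mem_erase hj)]

theorem aux_norm_le (c : Fin n → F) (S : Finset (Fin n)) (h : ∀ j, j ∉ S → c j = 0) :
    hammingNorm c ≤ S.card := by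
  rw [← auxSupp_card]
  apply Finset.card_le_card
  intro j hj
  by_contra hn
  simp only [auxSupp, Finset.mem_filter] at hj
  exact hj.2 (h j hn)

theorem aux_coset (C : Submodule F (Fin n → F)) (x : Fin n → F) :
    cosetWeight C x ≤ 1 ↔ x ∈ C ∨ ∃ c ∈ C, ∃ i a, a ≠ c i ∧ Function.update c i a = x := by
  have key : cosetWeight C x ≤ 1 ↔ ∃ c ∈ C, hammingNorm (x - c) ≤ 1 := by
    constructor
    · intro h
      have hne : {m : ℕ | ∃ c ∈ C, hammingNorm (x - c) = m}.Nonempty :=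
        ⟨_, 0, C.zero_mem, rfl⟩
      obtain ⟨c, hc, e⟩ := Nat.sInf_mem hne
      exact ⟨c, hc, by rw [e]; exact h⟩
    · rintro ⟨c, hc, h⟩
      exact le_trans (Nat.sInf_le ⟨c, hc, rfl⟩) h
  rw [key]
  constructor
  · rintro ⟨c, hc, h⟩
    by_cases hx : x - c = 0
    · left; rw [sub_eq_zero.1 hx]; exact hc
    · right
      obtain ⟨i, hi⟩ := Function.ne_iff.1 hx
      refine ⟨c, hc, i, x i, ?_, ?_⟩
      · intro e; apply hi; simp [e]
      · funext j
        by_cases hj : j = i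
        · subst hj; simp
        · rw [Function.update_of_ne hj]
          by_contra hne
          rw [← auxSupp_card, Finset.card_le_one] at h
          apply hj
          apply h
          · simp [auxSupp, sub_eq_zero]; exact fun e => hne e.symm
          · simpa [auxSupp] using hi
  · rintro (h | ⟨c, hc, i, a, ha, rfl⟩)
    · exact ⟨x, h, by simp⟩
    · refine ⟨c, hc, ?_⟩
      have := aux_norm_le (Function.update c i a - c) {i} (by
        intro j hj
        simp at hj
        simp [Function.update_of_ne hj])
      simpa using this

/-- triples -/
noncomputable def auxP (C : Submodule F (Fin n → F)) (w : ℕ) :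
    Finset ((Fin n → F) × Fin n × F) :=
  Finset.univ.filter (fun p => p.1 ∈ C ∧ p.2.2 ≠ p.1 p.2.1 ∧
    hammingNorm (Function.update p.1 p.2.1 p.2.2) = w)

theorem aux_split (C : Submodule F (Fin n → F)) (d w : ℕ) (hmin : HasMinDist C d) (hd : 3 ≤ d) :
    numVectorsCosetLe C w 1 = numCodewordsOfWeight C w + (auxP C w).card := by
  have hz : ∀ c ∈ C, ∀ S : Finset (Fin n), S.card ≤ 2 → (∀ j, j ∉ S → c j = 0) → c = 0 := by
    intro c hc S hS h
    by_contra h0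
    have h1 := hmin.1 c hc h0
    have h2 := aux_norm_le c S h
    omega
  have hinj : Set.InjOn (fun p : (Fin n → F) × Fin n × F => Function.update p.1 p.2.1 p.2.2)
      (auxP C w) := by
    rintro ⟨c, i, a⟩ h ⟨c', i', a'⟩ h' e
    simp only [auxP, Finset.coe_filter, Finset.mem_univ, true_and, Set.mem_ofPred_eq] at h h' e
    have hcc : c = c' := by
      apply sub_eq_zero.1
      apply hz _ (C.sub_mem h.1 h'.1) {i, i'} Finset.card_le_two
      intro j hj
      simp only [Finset.mem_insert, Finset.mem_singleton, not_or] at hj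
      have := congrFun e j
      rw [Function.update_of_ne hj.1, Function.update_of_ne hj.2] at this
      simp [this]
    subst hcc
    have hii : i = i' := by
      by_contra hne
      have := congrFun e i
      rw [Function.update_self, Function.update_of_ne hne] at this
      exact h.2.1 this
    subst hii
    have := congrFun e i
    simp only [Function.update_self] at this
    rw [this]
  rw [aux_num, ← Finset.card_image_of_injOn hinj, ← Finset.card_union_of_disjoint]
  · unfold numVectorsCosetLe
    rw [← Set.ncard_coe_finset]
    congr 1
    ext x
    rw [Set.mem_ofPred_eq, aux_coset]
    simp only [Finset.mem_coe, Finset.mem_union, Finset.mem_filter, Finset.mem_univ, true_and,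
      Finset.mem_image, auxP, Prod.exists]
    constructor
    · rintro ⟨h, (h1 | ⟨c, hc, i, a, ha, rfl⟩)⟩
      · exact Or.inl ⟨h1, h⟩
      · exact Or.inr ⟨c, i, a, ⟨hc, ha, h⟩, rfl⟩
    · rintro (⟨h1, h⟩ | ⟨c, i, a, ⟨hc, ha, h⟩, rfl⟩)
      · exact ⟨h, Or.inl h1⟩
      · exact ⟨h, Or.inr ⟨c, hc, i, a, ha, rfl⟩⟩
  · rw [Finset.disjoint_left]
    intro x hx hx'
    simp only [Finset.mem_filter, Finset.mem_univ, true_and,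
      Finset.mem_image, auxP, Prod.exists] at hx hx'
    obtain ⟨c, i, a, ⟨hc, ha, h⟩, rfl⟩ := hx'
    have := hz _ (C.sub_mem hx.1 hc) {i} (by simp) (by
      intro j hj
      simp at hj
      simp [Function.update_of_ne hj])
    have := congrFun this i
    simp [sub_eq_zero] at this
    exact ha this

theorem aux_inner (c : Fin n → F) (i : Fin n) (w : ℕ) :
    (∑ a : F, if a ≠ c i ∧ hammingNorm (Function.update c i a) = w then (1 : ℤ) else 0)
      = if c i ≠ 0 then (if hammingNorm c = w + 1 then 1 else 0)
          + (if hammingNorm c = w then 1 else 0) * ((Fintype.card F : ℤ) - 2)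
        else (if hammingNorm c + 1 = w then 1 else 0) * ((Fintype.card F : ℤ) - 1) := by
  by_cases h : c i ≠ 0
  · rw [if_pos h, Finset.sum_congr rfl (g := fun a => (if a = 0 then (1:ℤ) else 0) *
        (if hammingNorm c = w + 1 then 1 else 0) +
        (if hammingNorm c = w then 1 else 0) *
          (1 - (if a = 0 then (1:ℤ) else 0) - (if a = c i then (1:ℤ) else 0)))]
    · rw [Finset.sum_add_distrib, ← Finset.sum_mul, ← Finset.mul_sum, Finset.sum_sub_distrib,
        Finset.sum_sub_distrib]
      simp
      split_ifs <;> ring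
    · intro a _
      have hu := aux_norm_update c i a
      rw [if_pos h] at hu
      by_cases ha : a = 0
      · subst ha
        have h' : ¬ (0 = c i) := fun e => h e.symm
        have : hammingNorm (Function.update c i 0) = w ↔ hammingNorm c = w + 1 := by
          simp at hu; omega
        simp [h', this]
      · have : hammingNorm (Function.update c i a) = w ↔ hammingNorm c = w := by
          simp [ha] at hu; omega
        by_cases hc : a = c i
        · simp [← hc, ha]
        · simp [hc, ha, this]
  · rw [if_neg h, Finset.sum_congr rfl (g := fun a => 
        (if hammingNorm c + 1 = w then 1 else 0) * (1 - (if a = 0 then (1:ℤ) else 0)))]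
    · rw [← Finset.mul_sum, Finset.sum_sub_distrib]
      simp
    · intro a _
      have hu := aux_norm_update c i a
      rw [if_neg h] at hu
      push Not at h
      by_cases ha : a = 0
      · simp [h, ha]
      · have : hammingNorm (Function.update c i a) = w ↔ hammingNorm c + 1 = w := by
          simp [ha] at hu; omega
        simp [h, ha, this]

theorem aux_P_card (C : Submodule F (Fin n → F)) (w : ℕ) :
    ((auxP C (w + 1)).card : ℤ) =
      (w + 2) * numCodewordsOfWeight C (w + 2)
      + (w + 1) * ((Fintype.card F : ℤ) - 2) * numCodewordsOfWeight C (w + 1)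
      + (n - w) * ((Fintype.card F : ℤ) - 1) * numCodewordsOfWeight C w := by
  rw [auxP, Finset.card_filter]
  push_cast
  rw [Fintype.sum_prod_type]
  have h1 : ∀ c : Fin n → F, (∑ y : Fin n × F, if c ∈ C ∧ y.2 ≠ c y.1 ∧
      hammingNorm (Function.update c y.1 y.2) = w + 1 then (1:ℤ) else 0)
      = (w + 2) * (if c ∈ C ∧ hammingNorm c = w + 2 then 1 else 0)
      + (w + 1) * ((Fintype.card F : ℤ) - 2) * (if c ∈ C ∧ hammingNorm c = w + 1 then 1 else 0)
      + (n - w) * ((Fintype.card F : ℤ) - 1) * (if c ∈ C ∧ hammingNorm c = w then 1 else 0) := by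
    intro c
    by_cases hc : c ∈ C
    · simp only [hc, true_and]
      rw [Fintype.sum_prod_type]
      simp only [aux_inner]
      have hs : ∀ A B : ℤ, (∑ i : Fin n, if c i ≠ 0 then A else B)
          = hammingNorm c * A + (n - hammingNorm c) * B := by
        intro A B
        rw [Finset.sum_congr rfl (g := fun i => ((if c i ≠ 0 then 1 else 0 : ℕ) : ℤ) * (A - B) + B)]
        · rw [Finset.sum_add_distrib, ← Finset.sum_mul, ← Nat.cast_sum, ← aux_norm_sum]
          simp
          ring
        · intro i _
          split_ifs <;> simp
      rw [hs]
      by_cases e1 : hammingNorm c = w + 2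
      · simp [e1]
      · by_cases e2 : hammingNorm c = w + 1
        · simp [e2]
        · by_cases e3 : hammingNorm c = w
          · simp [e3]; omega
          · simp [e1, e2, e3]
    · simp [hc]
  simp only [h1]
  rw [Finset.sum_add_distrib, Finset.sum_add_distrib, ← Finset.mul_sum, ← Finset.mul_sum,
    ← Finset.mul_sum, aux_num, aux_num, aux_num]
  simp only [Finset.card_filter]
  push_cast
  rfl

end

/-- **Integral weight spectrum of cosets of weight ≤ 1 of an MDS code** (Corollary 4.5,
eq. (4.10)).  For an `[n,k,d]_q` MDS code with `d ≥ 3` and `d-1 ≤ w ≤ n`,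
`A_w^Σ(V^{≤1}) = A_w(C)·V_n(1)
  - (-1)^{w-d} n(q-1)[ C(n,w)C(w-1,d-2) - C(n-1,w-1)C(w-2,d-3) ]`,
where `V_n(1) = 1 + n(q-1)`. -/
theorem numVectorsCosetLe_one_eq' {F : Type*} [Field F] [Fintype F] [DecidableEq F]
    (q n k d w : ℕ) (hq : Fintype.card F = q)
    (C : Submodule F (Fin n → F))
    (hk : Module.finrank F C = k) (hmin : HasMinDist C d) (hMDS : d + k = n + 1)
    (hd : 3 ≤ d) (hw1 : d - 1 ≤ w) (hwn : w ≤ n) :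
    (numVectorsCosetLe C w 1 : ℤ) =
      (numCodewordsOfWeight C w : ℤ) * (1 + (n : ℤ) * ((q : ℤ) - 1))
        - (-1 : ℤ) ^ (w + d) * (n : ℤ) * ((q : ℤ) - 1) *
          ((n.choose w : ℤ) * ((w - 1).choose (d - 2) : ℤ)
            - ((n - 1).choose (w - 1) : ℤ) * ((w - 2).choose (d - 3) : ℤ)) := by
  obtain ⟨m, rfl⟩ : ∃ m, d = m + 3 := ⟨d - 3, by omega⟩
  obtain ⟨v, rfl⟩ : ∃ v, w = v + 2 := ⟨w - 2, by omega⟩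
  subst hq
  rw [aux_split C (m + 3) (v + 2) hmin hd]
  push_cast
  rw [aux_P_card C (v + 1)]
  have hA : ∀ j, (numCodewordsOfWeight C j : ℤ) = (n.choose j : ℤ) *
      auxA (Fintype.card F) (m + 1) j := fun j => aux_Aw C (m + 1) k j hk hmin hMDS
  rw [hA, hA, hA]
  have r1 : auxA (Fintype.card F) (m + 1) (v + 3) = ((Fintype.card F : ℤ) - 1) *
      auxA (Fintype.card F) (m + 1) (v + 2) + (-1) ^ (m + 1 + 1) * ((Fintype.card F : ℤ) - 1) *
        ((-1) ^ (v + 1 + 1) * ((v + 1).choose (m + 1) : ℤ)) := by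
    rw [auxA]; simp [auxE]
  have r2 : auxA (Fintype.card F) (m + 1) (v + 2) = ((Fintype.card F : ℤ) - 1) *
      auxA (Fintype.card F) (m + 1) (v + 1) + (-1) ^ (m + 1 + 1) * ((Fintype.card F : ℤ) - 1) *
        ((-1) ^ (v + 1) * (v.choose (m + 1) : ℤ)) := by
    rw [auxA]; simp [auxE]
  have n1 : ((v : ℤ) + 3) * (n.choose (v + 3) : ℤ) = (n.choose (v + 2) : ℤ) * (n - (v + 2)) := by
    have := Nat.choose_succ_right_eq n (v + 2)
    zify [hwn] at this
    linarith
  have n2 : ((v : ℤ) + 2) * (n.choose (v + 2) : ℤ) = (n.choose (v + 1) : ℤ) * (n - (v + 1)) := by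
    have := Nat.choose_succ_right_eq n (v + 1)
    zify [show v + 1 ≤ n by omega] at this
    linarith
  have n3 : (n : ℤ) * ((n - 1).choose (v + 1) : ℤ) = (n.choose (v + 2) : ℤ) * (v + 2) := by
    obtain ⟨n', rfl⟩ : ∃ n', n = n' + 1 := ⟨n - 1, by omega⟩
    have := Nat.add_one_mul_choose_eq n' (v + 1)
    zify at this
    simp only [Nat.add_sub_cancel]
    push_cast
    linarith
  have n4 : ((v + 1).choose (m + 1) : ℤ) = v.choose m + v.choose (m + 1) := by
    rw [Nat.choose_succ_succ]; push_cast; ring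
  have s1 : (-1 : ℤ) ^ (v + 2 + (m + 3)) = - ((-1) ^ v * (-1) ^ m) := by ring
  have e1 : v + 2 - 1 = v + 1 := by omega
  have e2 : m + 3 - 2 = m + 1 := by omega
  have e3 : v + 2 - 2 = v := by omega
  have e4 : m + 3 - 3 = m := by omega
  rw [s1]
  have r1' : auxA (Fintype.card F) (m + 1) (v + 3) = ((Fintype.card F : ℤ) - 1) *
      auxA (Fintype.card F) (m + 1) (v + 2) + ((-1) ^ v * (-1) ^ m) * ((Fintype.card F : ℤ) - 1) *
        ((v + 1).choose (m + 1) : ℤ) := by rw [r1]; ring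
  have r2' : auxA (Fintype.card F) (m + 1) (v + 2) = ((Fintype.card F : ℤ) - 1) *
      auxA (Fintype.card F) (m + 1) (v + 1) - ((-1) ^ v * (-1) ^ m) * ((Fintype.card F : ℤ) - 1) *
        (v.choose (m + 1) : ℤ) := by rw [r2]; ring
  clear r1 r2 hA s1 e1 e2 e3 e4
  generalize ((-1 : ℤ) ^ v * (-1) ^ m) = E at *
  rw [show v + 1 + 2 = v + 3 from rfl, show v + 1 + 1 = v + 2 from rfl]
  generalize auxA (Fintype.card F) (m + 1) (v + 3) = a3 at *
  generalize auxA (Fintype.card F) (m + 1) (v + 2) = a2 at *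
  generalize auxA (Fintype.card F) (m + 1) (v + 1) = a1 at *
  generalize (Fintype.card F : ℤ) = Q at *
  generalize (n.choose (v + 3) : ℤ) = c3 at *
  generalize (n.choose (v + 2) : ℤ) = c2 at *
  generalize (n.choose (v + 1) : ℤ) = c1 at *
  generalize ((n - 1).choose (v + 1) : ℤ) = b at *
  generalize ((v + 1).choose (m + 1) : ℤ) = x at *
  generalize (v.choose m : ℤ) = y at *
  generalize (v.choose (m + 1) : ℤ) = z at *
  push_cast
  linear_combination a3 * n1 - (Q - 1) * a1 * n2 + c2 * (n - (v + 2)) * r1' - (v + 2) * c2 * r2' + E * (Q - 1) * y * n3 - E * (Q - 1) * c2 * (v + 2) * n4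
end
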